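/- arXiv:1502.06216 — 7 statements merged into one kernel-verified Lean document; each statement's English description precedes it below -/
import Mathlib

section
/- Let N ≥ 1, let c ∈ ℝ^{N×N} be a cost matrix and γ > 0. For every q in the simplex Σ_N, the function p ↦ W_γ(p,q) is strictly convex on Σ_N. Consequently, for every proper, lower semicontinuous, convex function f : ℝ^N → ℝ ∪ {+∞} whose domain intersects Σ_N and every τ > 0, the problem min_{p ∈ Σ_N} W_γ(p,q) + τ f(p) admits a unique minimizer (the entropic JKO step Prox_{τf}^{W_γ}(q)). -/
open scoped BigOperators

noncomputable section

/-- A proper, lower semicontinuous, convex function with values in `ℝ ∪ {+∞}`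
(encoded as `EReal`, never taking the value `⊥`). -/
def ProperLSCConvex {E : Type*} [AddCommGroup E] [Module ℝ E] [TopologicalSpace E]
    (f : E → EReal) : Prop :=
  (∀ x, f x ≠ ⊥) ∧ (∃ x, f x ≠ ⊤) ∧ LowerSemicontinuous f ∧
    ∀ x y : E, ∀ a b : ℝ, 0 ≤ a → 0 ≤ b → a + b = 1 →
      f (a • x + b • y) ≤ (a : EReal) * f x + (b : EReal) * f y

/-- The probability simplex `Σ_N`. -/
def simplex (N : ℕ) : Set (Fin N → ℝ) :=
  {p | (∀ i, 0 ≤ p i) ∧ ∑ i, p i = 1}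

/-- The set of couplings `Π(p,q)`. -/
def couplings {N : ℕ} (p q : Fin N → ℝ) : Set (Fin N → Fin N → ℝ) :=
  {π | (∀ i j, 0 ≤ π i j) ∧ (∀ i, ∑ j, π i j = p i) ∧ (∀ j, ∑ i, π i j = q j)}

/-- Entropy `E(π) = Σ_{ij} π_{ij}(log π_{ij} - 1)` (with `0 log 0 = 0`). -/
def entropy {N : ℕ} (π : Fin N → Fin N → ℝ) : ℝ :=
  ∑ i, ∑ j, π i j * (Real.log (π i j) - 1)

/-- Frobenius inner product `⟨c, π⟩`. -/
def frob {N : ℕ} (c π : Fin N → Fin N → ℝ) : ℝ :=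
  ∑ i, ∑ j, c i j * π i j

/-- Entropic-regularized transport cost `W_γ(p,q)`. -/
def Wreg {N : ℕ} (c : Fin N → Fin N → ℝ) (γ : ℝ) (p q : Fin N → ℝ) : ℝ :=
  sInf ((fun π => frob c π + γ * entropy π) '' couplings p q)

/-!
Write `W_γ(p, q)` as the minimum of the energy `⟨c, π⟩ + γ E(π)` over the plans `π ≥ 0` with second
marginal `q`, restricted to the fibre of the first marginal over `p`. The energy is strictly convex,
the plans form a compact convex set and the first marginal is linear, so two distinct `p`'s have
distinct optimal plans, and averaging these shows that `W_γ(·, q)` is strictly convex. It is lower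
semicontinuous because its sublevel sets are images of compact sublevel sets of the energy. Hence a
minimizer of `W_γ(·, q) + τ f` exists on the compact simplex, and it is unique because on the
effective domain of `f` the objective is a real-valued strictly convex function.
-/

open Set

section ConvexAnalysis

theorem strictConvexOn_univ_pi_sum {𝕜 ι β : Type*} {E : ι → Type*} [Semiring 𝕜] [PartialOrder 𝕜]
    [Fintype ι] [∀ i, AddCommMonoid (E i)] [∀ i, Module 𝕜 (E i)]
    [AddCommMonoid β] [PartialOrder β] [IsOrderedCancelAddMonoid β] [Module 𝕜 β]
    {s : ∀ i, Set (E i)} {φ : ∀ i, E i → β} (hφ : ∀ i, StrictConvexOn 𝕜 (s i) (φ i)) :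
    StrictConvexOn 𝕜 (univ.pi s) fun x => ∑ i, φ i (x i) := by
  refine ⟨convex_pi fun i _ => (hφ i).1, fun x hx y hy hxy a b ha hb hab => ?_⟩
  obtain ⟨i, hi⟩ := Function.ne_iff.1 hxy
  simp only [Finset.smul_sum, ← Finset.sum_add_distrib]
  exact Finset.sum_lt_sum
    (fun j _ => (hφ j).convexOn.2 (hx j trivial) (hy j trivial) ha.le hb.le hab)
    ⟨i, Finset.mem_univ i, (hφ i).2 (hx i trivial) (hy i trivial) hi ha hb hab⟩

theorem strictConvexOn_const_smul {𝕜 E β : Type*} [CommSemiring 𝕜] [PartialOrder 𝕜]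
    [AddCommMonoid E] [SMul 𝕜 E] [AddCommMonoid β] [PartialOrder β] [Module 𝕜 β]
    [PosSMulStrictMono 𝕜 β] {s : Set E} {g : E → β} {r : 𝕜} (hr : 0 < r)
    (hg : StrictConvexOn 𝕜 s g) : StrictConvexOn 𝕜 s fun x => r • g x := by
  refine ⟨hg.1, fun x hx y hy hxy a b ha hb hab => ?_⟩
  calc r • g (a • x + b • y) < r • (a • g x + b • g y) :=
        smul_lt_smul_of_pos_left (hg.2 hx hy hxy ha hb hab) hr
    _ = a • r • g x + b • r • g y := by rw [smul_add, smul_comm r a, smul_comm r b]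

theorem strictConvexOn_of_isLeast_fiber {𝕜 E F β : Type*} [Semiring 𝕜] [PartialOrder 𝕜]
    [AddCommMonoid E] [Module 𝕜 E] [AddCommMonoid F] [Module 𝕜 F]
    [AddCommMonoid β] [PartialOrder β] [Module 𝕜 β] (L : E →ₗ[𝕜] F) {S : Set E} {T : Set F}
    {g : E → β} {h : F → β} (hT : Convex 𝕜 T) (hg : StrictConvexOn 𝕜 S g)
    (hh : ∀ p ∈ T, IsLeast (g '' (S ∩ L ⁻¹' {p})) (h p)) : StrictConvexOn 𝕜 T h := by
  refine ⟨hT, fun x hx y hy hxy a b ha hb hab => ?_⟩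
  obtain ⟨π, ⟨hπS, rfl⟩, hπ⟩ := (hh x hx).1
  obtain ⟨ρ, ⟨hρS, rfl⟩, hρ⟩ := (hh y hy).1
  have hne : π ≠ ρ := ne_of_apply_ne L hxy
  have hmem : a • π + b • ρ ∈ S ∩ L ⁻¹' {a • L π + b • L ρ} :=
    ⟨hg.1 hπS hρS ha.le hb.le hab, by simp⟩
  calc h (a • L π + b • L ρ) ≤ g (a • π + b • ρ) :=
        (hh _ (hT hx hy ha.le hb.le hab)).2 (mem_image_of_mem g hmem)
    _ < a • g π + b • g ρ := hg.2 hπS hρS hne ha hb hab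
    _ = a • h (L π) + b • h (L ρ) := by rw [hπ, hρ]

theorem lowerSemicontinuousOn_of_isLeast_fiber {X Y β : Type*} [TopologicalSpace X]
    [TopologicalSpace Y] [T2Space Y] [LinearOrder β] {S : Set X} {T : Set Y}
    {L : X → Y} {g : X → β} {h : Y → β} (hS : IsCompact S) (hL : ContinuousOn L S)
    (hg : LowerSemicontinuousOn g S) (hh : ∀ p ∈ T, IsLeast (g '' (S ∩ L ⁻¹' {p})) (h p)) :
    LowerSemicontinuousOn h T := by
  refine lowerSemicontinuousOn_iff_preimage_Iic.2 fun t => ?_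
  have hcompact : IsCompact (L '' (S ∩ g ⁻¹' Iic t)) :=
    (hg.isCompact_inter_preimage_Iic hS t).image_of_continuousOn (hL.mono inter_subset_left)
  refine ⟨_, hcompact.isClosed, ?_⟩
  ext p
  refine and_congr_right fun hp => ⟨fun hpt => ?_, ?_⟩
  · obtain ⟨x, ⟨hxS, hxp⟩, hx⟩ := (hh p hp).1
    exact ⟨x, ⟨hxS, hx.trans_le hpt⟩, hxp⟩
  · rintro ⟨x, ⟨hxS, hxt⟩, hxp⟩
    exact ((hh p hp).2 (mem_image_of_mem g ⟨hxS, hxp⟩)).trans hxt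

end ConvexAnalysis

section ExtendedReal

/-- The effective domain of an extended-real-valued function that never takes the value `⊥`: the set
on which it is finite, and agrees with its `EReal.toReal`. -/
def effectiveDomain {X : Type*} (f : X → EReal) : Set X :=
  {x | f x ≠ ⊤}

theorem continuous_coe_mul_ereal {τ : ℝ} (hτ : τ ≠ 0) :
    Continuous fun x : EReal => (τ : EReal) * x := by
  have hτ' : (τ : EReal) ≠ 0 := EReal.coe_ne_zero.2 hτ
  refine continuous_iff_continuousAt.2 fun x => ?_
  exact (EReal.continuousAt_mul (p := ((τ : EReal), x)) (.inl hτ') (.inl hτ')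
    (.inl (EReal.coe_ne_bot τ)) (.inl (EReal.coe_ne_top τ))).comp
    (f := fun x : EReal => ((τ : EReal), x)) (by fun_prop)

theorem coe_mul_ne_top_iff {τ : ℝ} (hτ : 0 < τ) {x : EReal} : (τ : EReal) * x ≠ ⊤ ↔ x ≠ ⊤ := by
  induction x with
  | bot => simp [EReal.coe_mul_bot_of_pos hτ]
  | coe x => simp [← EReal.coe_mul]
  | top => simp [EReal.coe_mul_top_of_pos hτ]

theorem coe_mul_ne_bot_iff {τ : ℝ} (hτ : 0 < τ) {x : EReal} : (τ : EReal) * x ≠ ⊥ ↔ x ≠ ⊥ := by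
  induction x with
  | bot => simp [EReal.coe_mul_bot_of_pos hτ]
  | coe x => simp [← EReal.coe_mul]
  | top => simp [EReal.coe_mul_top_of_pos hτ]

theorem exists_isMinOn_coe_add {X : Type*} [TopologicalSpace X] {s : Set X} {g : X → ℝ}
    {f : X → EReal} (hs : IsCompact s) (hne : s.Nonempty) (hg : LowerSemicontinuousOn g s)
    (hf : LowerSemicontinuousOn f s) : ∃ x ∈ s, IsMinOn (fun y => (g y : EReal) + f y) s x := by
  have hg' : LowerSemicontinuousOn (fun y => (g y : EReal)) s :=
    continuous_coe_real_ereal.comp_lowerSemicontinuousOn hg EReal.coe_strictMono.monotone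
  refine (hg'.add' hf fun x _ => ?_).exists_isMinOn hne hs
  exact EReal.continuousAt_add (.inl (EReal.coe_ne_top _)) (.inl (EReal.coe_ne_bot _))

theorem ne_top_of_isMinOn_coe_add {X : Type*} {s : Set X} {g : X → ℝ} {f : X → EReal} {x : X}
    (hdom : ∃ x₀ ∈ s, f x₀ ≠ ⊤) (hx : IsMinOn (fun y => (g y : EReal) + f y) s x) : f x ≠ ⊤ := by
  obtain ⟨x₀, hx₀s, hx₀⟩ := hdom
  intro hfx
  have htop : (⊤ : EReal) ≤ g x₀ + f x₀ := by
    simpa only [hfx, EReal.coe_add_top] using isMinOn_iff.1 hx x₀ hx₀s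
  exact EReal.add_ne_top (EReal.coe_ne_top _) hx₀ (top_le_iff.1 htop)

end ExtendedReal

namespace ProperLSCConvex

variable {E : Type*} [AddCommGroup E] [Module ℝ E] [TopologicalSpace E] {f : E → EReal}

theorem coe_mul (hf : ProperLSCConvex f) {τ : ℝ} (hτ : 0 < τ) :
    ProperLSCConvex fun x => (τ : EReal) * f x := by
  obtain ⟨hbot, ⟨x₀, hx₀⟩, hlsc, hconv⟩ := hf
  have hτ' : (0 : EReal) ≤ τ := EReal.coe_nonneg.2 hτ.le
  have hmono : Monotone fun x : EReal => (τ : EReal) * x :=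
    fun _ _ h => mul_le_mul_of_nonneg_left h hτ'
  refine ⟨fun x => (coe_mul_ne_bot_iff hτ).2 (hbot x), ⟨x₀, (coe_mul_ne_top_iff hτ).2 hx₀⟩,
    (continuous_coe_mul_ereal hτ.ne').comp_lowerSemicontinuous hlsc hmono,
    fun x y a b ha hb hab => ?_⟩
  calc (τ : EReal) * f (a • x + b • y) ≤ τ * (a * f x + b * f y) := hmono (hconv x y a b ha hb hab)
    _ = a * (τ * f x) + b * (τ * f y) := by
      rw [EReal.left_distrib_of_nonneg_of_ne_top hτ' (EReal.coe_ne_top τ),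
        mul_left_comm, mul_left_comm (τ : EReal)]

theorem coe_toReal (hf : ProperLSCConvex f) {x : E} (hx : f x ≠ ⊤) :
    ((f x).toReal : EReal) = f x :=
  EReal.coe_toReal hx (hf.1 x)

theorem convexOn_toReal (hf : ProperLSCConvex f) :
    ConvexOn ℝ (effectiveDomain f) fun x => (f x).toReal := by
  have hle : ∀ x, f x ≠ ⊤ → ∀ y, f y ≠ ⊤ → ∀ a b : ℝ, 0 ≤ a → 0 ≤ b → a + b = 1 →
      f (a • x + b • y) ≤ ((a * (f x).toReal + b * (f y).toReal : ℝ) : EReal) := by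
    intro x hx y hy a b ha hb hab
    simpa only [EReal.coe_add, EReal.coe_mul, hf.coe_toReal hx, hf.coe_toReal hy]
      using hf.2.2.2 x y a b ha hb hab
  refine ⟨fun x hx y hy a b ha hb hab => ?_, fun x hx y hy a b ha hb hab => ?_⟩
  · exact ((hle x hx y hy a b ha hb hab).trans_lt (EReal.coe_lt_top _)).ne
  · exact EReal.toReal_le_toReal (hle x hx y hy a b ha hb hab) (hf.1 _) (EReal.coe_ne_top _)

variable {s : Set E} {g : E → ℝ}

theorem isMinOn_add_toReal (hf : ProperLSCConvex f) {x : E} (hfx : f x ≠ ⊤)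
    (hx : IsMinOn (fun y => (g y : EReal) + f y) s x) :
    IsMinOn (fun y => g y + (f y).toReal) (s ∩ effectiveDomain f) x := by
  refine isMinOn_iff.2 fun y ⟨hys, hfy⟩ => EReal.coe_le_coe_iff.1 ?_
  simpa only [EReal.coe_add, hf.coe_toReal hfx, hf.coe_toReal hfy] using isMinOn_iff.1 hx y hys

theorem eq_of_isMinOn_coe_add (hf : ProperLSCConvex f) (hg : StrictConvexOn ℝ s g)
    (hdom : ∃ x₀ ∈ s, f x₀ ≠ ⊤) {x y : E} (hxs : x ∈ s) (hys : y ∈ s)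
    (hx : IsMinOn (fun z => (g z : EReal) + f z) s x)
    (hy : IsMinOn (fun z => (g z : EReal) + f z) s y) : x = y := by
  have hfx : f x ≠ ⊤ := ne_top_of_isMinOn_coe_add hdom hx
  have hfy : f y ≠ ⊤ := ne_top_of_isMinOn_coe_add hdom hy
  have hconvex : Convex ℝ (s ∩ effectiveDomain f) := hg.1.inter hf.convexOn_toReal.1
  have hstrict : StrictConvexOn ℝ (s ∩ effectiveDomain f) fun z => g z + (f z).toReal :=
    (hg.subset inter_subset_left hconvex).add_convexOn
      (hf.convexOn_toReal.subset inter_subset_right hconvex)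
  exact hstrict.eq_of_isMinOn (hf.isMinOn_add_toReal hfx hx) (hf.isMinOn_add_toReal hfy hy)
    ⟨hxs, hfx⟩ ⟨hys, hfy⟩

theorem existsUnique_isMinOn_coe_add (hf : ProperLSCConvex f) (hs : IsCompact s)
    (hg : StrictConvexOn ℝ s g) (hg_lsc : LowerSemicontinuousOn g s)
    (hdom : ∃ x₀ ∈ s, f x₀ ≠ ⊤) :
    ∃! x, x ∈ s ∧ IsMinOn (fun y => (g y : EReal) + f y) s x := by
  obtain ⟨x, hxs, hx⟩ := exists_isMinOn_coe_add hs (hdom.imp fun _ h => h.1) hg_lsc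
    (hf.2.2.1.lowerSemicontinuousOn s)
  exact ⟨x, ⟨hxs, hx⟩, fun y ⟨hys, hy⟩ => hf.eq_of_isMinOn_coe_add hg hdom hys hxs hy hx⟩

end ProperLSCConvex

section Marginals

variable {ι κ : Type*}

/-- The first marginal `π 𝟙` of a transport plan, as a linear map. -/
def firstMarginal [Fintype κ] : (ι → κ → ℝ) →ₗ[ℝ] (ι → ℝ) where
  toFun π i := ∑ j, π i j
  map_add' π ρ := by ext; simp [Finset.sum_add_distrib]
  map_smul' a π := by ext; simp [Finset.mul_sum]

theorem continuous_firstMarginal [Fintype κ] :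
    Continuous (firstMarginal : (ι → κ → ℝ) →ₗ[ℝ] (ι → ℝ)) :=
  continuous_pi fun i => continuous_finsetSum _ fun j _ => continuous_apply_apply i j

variable [Fintype ι]

/-- The second marginal `πᵀ 𝟙` of a transport plan, as a linear map. -/
def secondMarginal : (ι → κ → ℝ) →ₗ[ℝ] (κ → ℝ) where
  toFun π j := ∑ i, π i j
  map_add' π ρ := by ext; simp [Finset.sum_add_distrib]
  map_smul' a π := by ext; simp [Finset.mul_sum]

theorem continuous_secondMarginal :
    Continuous (secondMarginal : (ι → κ → ℝ) →ₗ[ℝ] (κ → ℝ)) :=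
  continuous_pi fun j => continuous_finsetSum _ fun i _ => continuous_apply_apply i j

/-- The nonnegative transport plans with second marginal `q` and free first marginal. Minimizing
over `p` and over the couplings of `p` and `q` amounts to minimizing over this set. -/
def plansInto (ι : Type*) {κ : Type*} [Fintype ι] (q : κ → ℝ) : Set (ι → κ → ℝ) :=
  Ici 0 ∩ secondMarginal ⁻¹' {q}

theorem convex_plansInto (q : κ → ℝ) : Convex ℝ (plansInto ι q) :=
  (convex_Ici 0).inter ((convex_singleton q).linear_preimage secondMarginal)

theorem plansInto_subset_Icc (q : κ → ℝ) : plansInto ι q ⊆ Icc 0 fun _ => q := by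
  rintro π ⟨hπ, rfl⟩
  exact ⟨hπ, fun i j => Finset.single_le_sum (f := fun i => π i j) (fun i _ => hπ i j)
    (Finset.mem_univ i)⟩

theorem isCompact_plansInto (q : κ → ℝ) : IsCompact (plansInto ι q) :=
  isCompact_Icc.of_isClosed_subset
    (isClosed_Ici.inter (isClosed_singleton.preimage continuous_secondMarginal))
    (plansInto_subset_Icc q)

end Marginals

section Couplings

variable {N : ℕ}

theorem convex_simplex : Convex ℝ (simplex N) :=
  convex_stdSimplex ℝ (Fin N)

theorem isCompact_simplex : IsCompact (simplex N) :=
  isCompact_stdSimplex ℝ (Fin N)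

theorem couplings_eq_plansInto_inter (p q : Fin N → ℝ) :
    couplings p q = plansInto (Fin N) q ∩ firstMarginal ⁻¹' {p} := by
  ext π
  simp only [couplings, plansInto, firstMarginal, secondMarginal, mem_ofPred_eq, mem_inter_iff,
    mem_Ici, mem_preimage, mem_singleton_iff, LinearMap.coe_mk, AddHom.coe_mk, funext_iff,
    Pi.le_def, Pi.zero_apply]
  tauto

theorem isCompact_couplings (p q : Fin N → ℝ) : IsCompact (couplings p q) := by
  rw [couplings_eq_plansInto_inter]
  exact (isCompact_plansInto q).inter_right (isClosed_singleton.preimage continuous_firstMarginal)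

theorem couplings_nonempty {p q : Fin N → ℝ} (hp : p ∈ simplex N) (hq : q ∈ simplex N) :
    (couplings p q).Nonempty := by
  refine ⟨fun i j => p i * q j, fun i j => mul_nonneg (hp.1 i) (hq.1 j), fun i => ?_, fun j => ?_⟩
  · rw [← Finset.mul_sum, hq.2, mul_one]
  · rw [← Finset.sum_mul, hp.2, one_mul]

end Couplings

section EntropicTransport

variable {N : ℕ}

theorem strictConvexOn_mul_log_sub_one :
    StrictConvexOn ℝ (Ici 0) fun x : ℝ => x * (Real.log x - 1) := by
  simp only [mul_sub, mul_one]
  exact Real.strictConvexOn_mul_log.sub_concaveOn (concaveOn_id (convex_Ici 0))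

theorem strictConvexOn_entropy : StrictConvexOn ℝ (Ici 0) (entropy (N := N)) := by
  have h := strictConvexOn_univ_pi_sum fun _ : Fin N =>
    strictConvexOn_univ_pi_sum fun _ : Fin N => strictConvexOn_mul_log_sub_one
  simp only [pi_univ_Ici] at h
  exact h

theorem continuous_entropy : Continuous (entropy (N := N)) := by
  have h : Continuous fun x : ℝ => x * (Real.log x - 1) := by
    simp only [mul_sub, mul_one]
    exact Real.continuous_mul_log.sub continuous_id
  exact continuous_finsetSum _ fun i _ => continuous_finsetSum _ fun j _ =>
    h.comp (continuous_apply_apply i j)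

theorem isLinearMap_frob (c : Fin N → Fin N → ℝ) : IsLinearMap ℝ (frob c) where
  map_add π ρ := by simp [frob, mul_add, Finset.sum_add_distrib]
  map_smul a π := by simp [frob, Finset.mul_sum, mul_left_comm]

/-- The energy `⟨c, π⟩ + γ E(π)` whose minimum over the couplings of `p` and `q` is `W_γ(p, q)`. -/
def entropicEnergy (c : Fin N → Fin N → ℝ) (γ : ℝ) (π : Fin N → Fin N → ℝ) : ℝ :=
  frob c π + γ * entropy π

theorem continuous_entropicEnergy (c : Fin N → Fin N → ℝ) (γ : ℝ) :
    Continuous (entropicEnergy c γ) :=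
  (isLinearMap_frob c).mk'.continuous_of_finiteDimensional.add (continuous_entropy.const_mul γ)

theorem strictConvexOn_entropicEnergy (c : Fin N → Fin N → ℝ) {γ : ℝ} (hγ : 0 < γ) :
    StrictConvexOn ℝ (Ici 0) (entropicEnergy c γ) :=
  ((isLinearMap_frob c).mk'.convexOn (convex_Ici 0)).add_strictConvexOn
    (strictConvexOn_const_smul hγ strictConvexOn_entropy)

theorem isLeast_Wreg (c : Fin N → Fin N → ℝ) (γ : ℝ) {p q : Fin N → ℝ} (hp : p ∈ simplex N)
    (hq : q ∈ simplex N) :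
    IsLeast (entropicEnergy c γ '' (plansInto (Fin N) q ∩ firstMarginal ⁻¹' {p}))
      (Wreg c γ p q) := by
  rw [← couplings_eq_plansInto_inter]
  exact ((isCompact_couplings p q).image (continuous_entropicEnergy c γ)).isLeast_sInf
    ((couplings_nonempty hp hq).image _)

theorem strictConvexOn_Wreg (c : Fin N → Fin N → ℝ) {γ : ℝ} (hγ : 0 < γ) {q : Fin N → ℝ}
    (hq : q ∈ simplex N) : StrictConvexOn ℝ (simplex N) fun p => Wreg c γ p q :=
  strictConvexOn_of_isLeast_fiber firstMarginal convex_simplex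
    ((strictConvexOn_entropicEnergy c hγ).subset inter_subset_left (convex_plansInto q))
    fun _ hp => isLeast_Wreg c γ hp hq

theorem lowerSemicontinuousOn_Wreg (c : Fin N → Fin N → ℝ) (γ : ℝ) {q : Fin N → ℝ}
    (hq : q ∈ simplex N) : LowerSemicontinuousOn (fun p => Wreg c γ p q) (simplex N) :=
  lowerSemicontinuousOn_of_isLeast_fiber (isCompact_plansInto q)
    continuous_firstMarginal.continuousOn
    ((continuous_entropicEnergy c γ).lowerSemicontinuous.lowerSemicontinuousOn _)
    fun _ hp => isLeast_Wreg c γ hp hq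

end EntropicTransport

/-- For `q ∈ Σ_N`, `p ↦ W_γ(p,q)` is strictly convex on `Σ_N`; consequently for every
proper lsc convex `f` with domain intersecting `Σ_N` and every `τ > 0`, the entropic
JKO step `min_{p ∈ Σ_N} W_γ(p,q) + τ f(p)` has a unique minimizer. -/
theorem entropic_JKO_step_unique {N : ℕ} (hN : 1 ≤ N)
    (c : Fin N → Fin N → ℝ) (γ : ℝ) (hγ : 0 < γ)
    (q : Fin N → ℝ) (hq : q ∈ simplex N) :
    StrictConvexOn ℝ (simplex N) (fun p => Wreg c γ p q) ∧
      ∀ f : (Fin N → ℝ) → EReal, ProperLSCConvex f →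
        (∃ p ∈ simplex N, f p ≠ ⊤) →
        ∀ τ : ℝ, 0 < τ →
          ∃! p : Fin N → ℝ, p ∈ simplex N ∧
            ∀ p' ∈ simplex N,
              ((Wreg c γ p q : ℝ) : EReal) + (τ : EReal) * f p ≤
                ((Wreg c γ p' q : ℝ) : EReal) + (τ : EReal) * f p' := by
  have hstrict : StrictConvexOn ℝ (simplex N) fun p => Wreg c γ p q := strictConvexOn_Wreg c hγ hq
  refine ⟨hstrict, fun f hf hdom τ hτ => ?_⟩
  have hdom' : ∃ p ∈ simplex N, (τ : EReal) * f p ≠ ⊤ :=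
    hdom.imp fun p hp => ⟨hp.1, (coe_mul_ne_top_iff hτ).2 hp.2⟩
  exact (hf.coe_mul hτ).existsUnique_isMinOn_coe_add isCompact_simplex hstrict
    (lowerSemicontinuousOn_Wreg c γ hq) hdom'
end
end

section
/- (Convergence of Dykstra's algorithm for the KL divergence.) Let N ≥ 1, let ξ ∈ ℝ^{N×N} have strictly positive entries, and let φ_1, φ_2 : ℝ^{N×N} → ℝ ∪ {+∞} be proper, lower semicontinuous, convex functions such that ri(dom φ_1) ∩ ri(dom φ_2) ∩ {π : all entries of π are strictly positive} ≠ ∅. Define π^{(0)} = ξ, z^{(0)} = z^{(−1)} = the all-ones matrix, and for ℓ ≥ 1: π^{(ℓ)} = Prox^{KL}_{φ_{[ℓ]_2}}(π^{(ℓ−1)} ⊙ z^{(ℓ−2)}) and z^{(ℓ)} = z^{(ℓ−2)} ⊙ π^{(ℓ−1)} ⊘ π^{(ℓ)}, where [ℓ]_2 = 1 if ℓ is odd and 2 if ℓ is even. Then every iterate π^{(ℓ)} has strictly positive entries, and π^{(ℓ)} converges, as ℓ → ∞, to the unique minimizer of π ↦ KL(π|ξ) + φ_1(π) + φ_2(π)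 over ℝ_+^{N×N}. -/
open scoped BigOperators
open Filter Topology

noncomputable section

def KLmat {N : ℕ} (π ξ : Fin N → Fin N → ℝ) : ℝ :=
  ∑ i, ∑ j, (π i j * Real.log (π i j / ξ i j) - π i j + ξ i j)

/-- `πp` is the KL proximal point `Prox^{KL}_φ(μ)`: it is nonnegative and minimizes
`π̃ ↦ KL(π̃|μ) + φ(π̃)` over nonnegative matrices. -/
def IsKLProx {N : ℕ} (φ : (Fin N → Fin N → ℝ) → EReal)
    (μ πp : Fin N → Fin N → ℝ) : Prop :=
  (∀ i j, 0 ≤ πp i j) ∧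
    ∀ σ : Fin N → Fin N → ℝ, (∀ i j, 0 ≤ σ i j) →
      ((KLmat πp μ : ℝ) : EReal) + φ πp ≤ ((KLmat σ μ : ℝ) : EReal) + φ σ

/-!
Dykstra's algorithm is block coordinate ascent on the Fenchel dual. The optimality condition of each
proximal step gives an affine minorant of `φ n`, exact at the new iterate `x n`, with slope
`v n = log z`. Replacing `φ n` and `φ (n + 1)` by their minorants in `KL(·|ξ) + φ₁ + φ₂` gives
`d n + KL(·|x (n + 1))` with `d n` the dual value, so

* weak duality reads `d n + KL(σ|x (n + 1)) ≤ KL(σ|ξ) + φ₁ σ + φ₂ σ` for all `σ`;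
* the ascent is at least `KL(x (n + 2)|x (n + 1))`, so these divergences are summable.

Testing weak duality at a positive point where `φ₁` and `φ₂` are finite confines the iterates to a
compact subset of the open orthant, on which the steps of `x` and of `v` are both
`O(√KL(x (n + 2)|x (n + 1)))`. Hence `v n` grows at most like the partial sums of a square-summable
sequence, and by divergence of the harmonic series the duality gap `v n ⬝ᵥ (x n - x (n + 1))`
vanishes along a subsequence. A cluster point `x*` of that subsequence has objective value
`≤ lim d n`, and weak duality at `x*` bounds `KL(x*|x (n + 1))` by `lim d - d n → 0` along the whole
sequence.
-/

section Vectors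

variable {ι : Type*} [Fintype ι]

/-! ### Entrywise Kullback–Leibler divergence -/

/-- The summand `b log (b / a) - b + a` of the generalized Kullback–Leibler divergence, meant for
`0 ≤ b` and `0 < a`; `Real.log 0 = 0` implements the convention `0 log 0 = 0`. -/
def klTerm (b a : ℝ) : ℝ := b * Real.log (b / a) - b + a

lemma klTerm_eq_mul_klFun {a : ℝ} (ha : a ≠ 0) (b : ℝ) :
    klTerm b a = a * InformationTheory.klFun (b / a) := by
  rw [klTerm, InformationTheory.klFun]
  field_simp
  ring

lemma klTerm_self {a : ℝ} (ha : a ≠ 0) : klTerm a a = 0 := by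
  simp [klTerm_eq_mul_klFun ha, div_self ha, InformationTheory.klFun_one]

lemma continuous_klTerm_left {a : ℝ} (ha : a ≠ 0) : Continuous fun b => klTerm b a := by
  simp only [klTerm_eq_mul_klFun ha]
  fun_prop

lemma sq_sqrt_sub_sqrt_le_klTerm {a b : ℝ} (ha : 0 < a) (hb : 0 ≤ b) :
    (√b - √a) ^ 2 ≤ klTerm b a := by
  rcases hb.eq_or_lt with rfl | hb
  · simp [klTerm, Real.sq_sqrt ha.le]
  have hlog : 1 - √a / √b ≤ Real.log (b / a) / 2 := by
    have := Real.one_sub_inv_le_log_of_pos (show 0 < √(b / a) by positivity)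
    rwa [Real.log_sqrt (by positivity), Real.sqrt_div hb.le, inv_div] at this
  have hmul : b * (√a / √b) = √a * √b := by
    rw [mul_div_left_comm, Real.div_sqrt]
  have := mul_le_mul_of_nonneg_left hlog hb.le
  rw [klTerm]
  linarith [sub_sq √b √a, Real.sq_sqrt hb.le, Real.sq_sqrt ha.le, mul_comm √a √b]

lemma klTerm_nonneg {a b : ℝ} (ha : 0 < a) (hb : 0 ≤ b) : 0 ≤ klTerm b a :=
  (sq_nonneg _).trans (sq_sqrt_sub_sqrt_le_klTerm ha hb)

lemma abs_sqrt_sub_sqrt_le_sqrt_klTerm {a b : ℝ} (ha : 0 < a) (hb : 0 ≤ b) :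
    |√b - √a| ≤ √(klTerm b a) :=
  Real.abs_le_sqrt (sq_sqrt_sub_sqrt_le_klTerm ha hb)

lemma le_of_klTerm_le {a b B : ℝ} (ha : 0 < a) (hb : 0 ≤ b) (h : klTerm b a ≤ B) :
    a ≤ (√b + √B) ^ 2 := by
  have hdist := (abs_sqrt_sub_sqrt_le_sqrt_klTerm ha hb).trans (Real.sqrt_le_sqrt h)
  have hsqrt : √a ≤ √b + √B := by linarith [neg_abs_le (√b - √a)]
  calc a = √a ^ 2 := (Real.sq_sqrt ha.le).symm
    _ ≤ (√b + √B) ^ 2 := by gcongr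

lemma ge_of_klTerm_le {a b B : ℝ} (ha : 0 < a) (hb : 0 < b) (h : klTerm b a ≤ B) :
    b * Real.exp (-((B + b) / b)) ≤ a := by
  have hlog : Real.log (b / a) ≤ (B + b) / b := by
    rw [klTerm] at h
    rw [le_div_iff₀ hb]
    linarith
  calc b * Real.exp (-((B + b) / b)) ≤ b * Real.exp (-Real.log (b / a)) := by gcongr
    _ = a := by rw [Real.exp_neg, Real.exp_log (by positivity), inv_div, mul_div_cancel₀ _ hb.ne']

lemma abs_sub_le_sqrt_klTerm {a b C : ℝ} (ha : 0 < a) (hb : 0 ≤ b) (haC : a ≤ C) (hbC : b ≤ C) :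
    |b - a| ≤ 2 * √C * √(klTerm b a) := by
  have hfactor : b - a = (√b + √a) * (√b - √a) := by
    linear_combination -Real.sq_sqrt hb + Real.sq_sqrt ha.le
  have hsum : √b + √a ≤ 2 * √C := by linarith [Real.sqrt_le_sqrt haC, Real.sqrt_le_sqrt hbC]
  rw [hfactor, abs_mul, abs_of_nonneg (by positivity)]
  gcongr
  exact abs_sqrt_sub_sqrt_le_sqrt_klTerm ha hb

lemma abs_log_sub_log_le {a b c : ℝ} (hc : 0 < c) (ha : c ≤ a) (hb : c ≤ b) :
    |Real.log b - Real.log a| ≤ |b - a| / c := by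
  wlog hab : a ≤ b generalizing a b
  · rw [abs_sub_comm, abs_sub_comm b]
    exact this hb ha (le_of_not_ge hab)
  have ha₀ : 0 < a := hc.trans_le ha
  rw [abs_of_nonneg (sub_nonneg.2 (Real.log_le_log ha₀ hab)), abs_of_nonneg (sub_nonneg.2 hab)]
  calc Real.log b - Real.log a = Real.log (b / a) :=
        (Real.log_div (ha₀.trans_le hab).ne' ha₀.ne').symm
    _ ≤ b / a - 1 := Real.log_le_sub_one_of_pos (div_pos (ha₀.trans_le hab) ha₀)
    _ = (b - a) / a := by rw [sub_div, div_self ha₀.ne']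
    _ ≤ (b - a) / c := by gcongr

lemma tendsto_of_tendsto_klTerm {α : Type*} {l : Filter α} {u : α → ℝ} {b : ℝ}
    (hu : ∀ n, 0 < u n) (hb : 0 ≤ b) (h : Tendsto (fun n => klTerm b (u n)) l (𝓝 0)) :
    Tendsto u l (𝓝 b) := by
  have hsqrt : Tendsto (fun n => √(u n)) l (𝓝 √b) := by
    rw [tendsto_iff_dist_tendsto_zero]
    refine squeeze_zero (fun _ => dist_nonneg) (fun n => ?_) (by simpa using h.sqrt)
    rw [dist_comm, Real.dist_eq]
    exact abs_sqrt_sub_sqrt_le_sqrt_klTerm (hu n) hb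
  simpa only [Real.sq_sqrt hb, Real.sq_sqrt (hu _).le] using hsqrt.pow 2

/-! ### Divergence of vectors -/

/-- The generalized Kullback–Leibler divergence `KL(p|q)` of nonnegative vectors indexed by a
finite type; matrices are the case of a product index type. -/
def klVec (p q : ι → ℝ) : ℝ := ∑ i, klTerm (p i) (q i)

lemma klVec_self {q : ι → ℝ} (hq : ∀ i, 0 < q i) : klVec q q = 0 :=
  Finset.sum_eq_zero fun i _ => klTerm_self (hq i).ne'

lemma klVec_nonneg {p q : ι → ℝ} (hp : 0 ≤ p) (hq : ∀ i, 0 < q i) : 0 ≤ klVec p q :=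
  Finset.sum_nonneg fun i _ => klTerm_nonneg (hq i) (hp i)

lemma klTerm_le_klVec {p q : ι → ℝ} (hp : 0 ≤ p) (hq : ∀ i, 0 < q i) (i : ι) :
    klTerm (p i) (q i) ≤ klVec p q :=
  Finset.single_le_sum (f := fun i => klTerm (p i) (q i))
    (fun i _ => klTerm_nonneg (hq i) (hp i)) (Finset.mem_univ i)

lemma continuous_klVec_left {q : ι → ℝ} (hq : ∀ i, 0 < q i) : Continuous fun p => klVec p q :=
  continuous_finsetSum _ fun i _ => (continuous_klTerm_left (hq i).ne').comp (continuous_apply i)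

lemma klVec_change_reference {q ξ : ι → ℝ} (hq : ∀ i, 0 < q i) (hξ : ∀ i, 0 < ξ i) (p : ι → ℝ) :
    klVec p ξ = klVec p q + (Real.log ∘ q - Real.log ∘ ξ) ⬝ᵥ p + ∑ i, (ξ i - q i) := by
  simp only [klVec, dotProduct, ← Finset.sum_add_distrib]
  refine Finset.sum_congr rfl fun i _ => ?_
  simp only [klTerm, Pi.sub_apply, Function.comp_apply]
  rcases eq_or_ne (p i) 0 with hp | hp
  · simp [hp]
  · rw [Real.log_div hp (hξ i).ne', Real.log_div hp (hq i).ne']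
    ring

lemma klVec_sub_klVec_le {p w μ : ι → ℝ} (hp : 0 ≤ p) (hw : ∀ i, 0 < w i) (hμ : ∀ i, 0 < μ i) :
    klVec w μ - klVec p μ ≤ (Real.log ∘ w - Real.log ∘ μ) ⬝ᵥ (w - p) := by
  rw [klVec_change_reference hw hμ p, klVec_change_reference hw hμ w, klVec_self hw,
    dotProduct_sub]
  linarith [klVec_nonneg hp hw]

lemma exists_bounds_of_klVec_le {p : ι → ℝ} (hp : ∀ i, 0 < p i) (B : ℝ) :
    ∃ c C : ℝ, 0 < c ∧ ∀ q : ι → ℝ, (∀ i, 0 < q i) → klVec p q ≤ B →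
      ∀ i, q i ∈ Set.Icc c C := by
  obtain ⟨c, hc, hcp⟩ := Pi.exists_forall_pos_add_lt
    (x := 0) (y := fun i => p i * Real.exp (-((B + p i) / p i)))
    fun i => mul_pos (hp i) (Real.exp_pos _)
  obtain ⟨C, hC⟩ := (Set.finite_range fun i => (√(p i) + √B) ^ 2).bddAbove
  refine ⟨c, C, hc, fun q hq hle i => ?_⟩
  have hterm : klTerm (p i) (q i) ≤ B := (klTerm_le_klVec (fun i => (hp i).le) hq i).trans hle
  constructor
  · have := ge_of_klTerm_le (hq i) (hp i) hterm
    have := hcp i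
    simp only [Pi.zero_apply, zero_add] at this
    linarith
  · exact (le_of_klTerm_le (hq i) (hp i).le hterm).trans (hC ⟨i, rfl⟩)

lemma norm_sub_le_sqrt_klVec {p q : ι → ℝ} {C : ℝ} (hp : 0 ≤ p) (hq : ∀ i, 0 < q i)
    (hpC : ∀ i, p i ≤ C) (hqC : ∀ i, q i ≤ C) :
    ‖p - q‖ ≤ 2 * √C * √(klVec p q) := by
  refine (pi_norm_le_iff_of_nonneg (by positivity)).2 fun i => ?_
  refine (abs_sub_le_sqrt_klTerm (hq i) (hp i) (hqC i) (hpC i)).trans ?_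
  gcongr
  exact klTerm_le_klVec hp hq i

lemma norm_log_sub_log_le {p q : ι → ℝ} {c : ℝ} (hc : 0 < c) (hp : ∀ i, c ≤ p i)
    (hq : ∀ i, c ≤ q i) : ‖Real.log ∘ p - Real.log ∘ q‖ ≤ ‖p - q‖ / c := by
  refine (pi_norm_le_iff_of_nonneg (by positivity)).2 fun i => ?_
  refine (abs_log_sub_log_le hc (hq i) (hp i)).trans ?_
  gcongr
  exact norm_le_pi_norm (p - q) i

lemma tendsto_of_tendsto_klVec {α : Type*} {l : Filter α} {u : α → ι → ℝ} {p : ι → ℝ}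
    (hu : ∀ n i, 0 < u n i) (hp : 0 ≤ p) (h : Tendsto (fun n => klVec p (u n)) l (𝓝 0)) :
    Tendsto u l (𝓝 p) :=
  tendsto_pi_nhds.2 fun i => tendsto_of_tendsto_klTerm (fun n => hu n i) (hp i) <|
    squeeze_zero (fun n => klTerm_nonneg (hu n i) (hp i))
      (fun n => klTerm_le_klVec hp (hu n) i) h

/-! ### Proximal points -/

/-- `p` is a KL proximal point of `φ` at `μ`, for vectors indexed by a finite type. -/
def IsKLProxVec (φ : (ι → ℝ) → EReal) (μ p : ι → ℝ) : Prop :=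
  0 ≤ p ∧ IsMinOn (fun σ => (klVec σ μ : EReal) + φ σ) (Set.Ici 0) p

lemma log_sub_log_segment_mul_nonneg {a b t : ℝ} (ha : 0 ≤ a) (hb : 0 < b)
    (ht : t ∈ Set.Ioc 0 1) :
    0 ≤ (Real.log b - Real.log ((1 - t) * a + t * b)) * (b - a) := by
  have hw : 0 < (1 - t) * a + t * b :=
    add_pos_of_nonneg_of_pos (mul_nonneg (sub_nonneg.2 ht.2) ha) (mul_pos ht.1 hb)
  rcases le_total a b with hab | hab
  · exact mul_nonneg (sub_nonneg.2 (Real.log_le_log hw (by nlinarith [ht.2]))) (sub_nonneg.2 hab)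
  · exact mul_nonneg_of_nonpos_of_nonpos
      (sub_nonpos.2 (Real.log_le_log hb (by nlinarith [ht.2]))) (sub_nonpos.2 hab)

lemma ProperLSCConvex.exists_eq_coe {E : Type*} [AddCommGroup E] [Module ℝ E] [TopologicalSpace E]
    {f : E → EReal} (hf : ProperLSCConvex f) {x : E} (hx : f x ≠ ⊤) : ∃ r : ℝ, f x = r :=
  ⟨_, (EReal.coe_toReal hx (hf.1 x)).symm⟩

namespace IsKLProxVec

variable {φ : (ι → ℝ) → EReal} {μ p σ : ι → ℝ}

lemma apply_ne_top (hp : IsKLProxVec φ μ p) (hσ : 0 ≤ σ) (hσφ : φ σ ≠ ⊤) : φ p ≠ ⊤ := by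
  intro htop
  have hle : (klVec p μ : EReal) + φ p ≤ klVec σ μ + φ σ := hp.2 hσ
  rw [htop, EReal.coe_add_top, top_le_iff] at hle
  exact EReal.add_ne_top (EReal.coe_ne_top _) hσφ hle

/-- First-order optimality along the segment from `p` to `σ`; letting `t → 0` gives both the
positivity of `p` and the subgradient inequality at `p`. -/
lemma sub_le_dotProduct_segment (hφ : ProperLSCConvex φ) (hμ : ∀ i, 0 < μ i)
    (hp : IsKLProxVec φ μ p) {r s : ℝ} (hr : φ p = r) (hs : φ σ = s) {t : ℝ}
    (ht : t ∈ Set.Ioc 0 1) (hw : ∀ i, 0 < ((1 - t) • p + t • σ) i) :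
    r - s ≤ (Real.log ∘ ((1 - t) • p + t • σ) - Real.log ∘ μ) ⬝ᵥ (σ - p) := by
  set w := (1 - t) • p + t • σ with hwdef
  have hconv : φ w ≤ (((1 - t) * r + t * s : ℝ) : EReal) := by
    simpa [hr, hs] using hφ.2.2.2 p σ (1 - t) t (by linarith [ht.2]) ht.1.le (by ring)
  have hmin : klVec p μ + r ≤ klVec w μ + ((1 - t) * r + t * s) := by
    have hle : (klVec p μ : EReal) + φ p ≤ klVec w μ + φ w := hp.2 fun i => (hw i).le
    rw [hr] at hle
    exact_mod_cast hle.trans (add_le_add_right hconv _)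
  have hdir : w - p = t • (σ - p) := by rw [hwdef]; module
  have hkl := klVec_sub_klVec_le hp.1 hw hμ
  rw [hdir, dotProduct_smul, smul_eq_mul] at hkl
  exact le_of_mul_le_mul_left (by linarith) ht.1

lemma pos (hφ : ProperLSCConvex φ) (hμ : ∀ i, 0 < μ i) (hp : IsKLProxVec φ μ p)
    (hσ : ∀ i, 0 < σ i) (hσφ : φ σ ≠ ⊤) (i : ι) : 0 < p i := by
  obtain ⟨s, hs⟩ := hφ.exists_eq_coe hσφ
  obtain ⟨r, hr⟩ := hφ.exists_eq_coe (hp.apply_ne_top (fun i => (hσ i).le) hσφ)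
  refine (hp.1 i).lt_of_ne' fun hpi => ?_
  set M := (Real.log ∘ σ - Real.log ∘ μ) ⬝ᵥ (σ - p)
  -- The slope at `p` towards `σ` is at most `M + σ i * log t`, which tends to `-∞`.
  have hslope : ∀ t ∈ Set.Ioc (0 : ℝ) 1, r - s ≤ M + σ i * Real.log t := by
    intro t ht
    have hw : ∀ j, 0 < ((1 - t) • p + t • σ) j := fun j =>
      add_pos_of_nonneg_of_pos (mul_nonneg (sub_nonneg.2 ht.2) (hp.1 j)) (mul_pos ht.1 (hσ j))
    have hsum : σ i * -Real.log t ≤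
        (Real.log ∘ σ - Real.log ∘ ((1 - t) • p + t • σ)) ⬝ᵥ (σ - p) := by
      refine le_of_eq_of_le ?_ (Finset.single_le_sum
        (fun j _ => log_sub_log_segment_mul_nonneg (hp.1 j) (hσ j) ht) (Finset.mem_univ i))
      simp [hpi, Real.log_mul ht.1.ne' (hσ i).ne', mul_comm]
    have := sub_le_dotProduct_segment hφ hμ hp hr hs ht hw
    rw [← sub_sub_sub_cancel_left _ _ (Real.log ∘ σ), sub_dotProduct] at this
    linarith
  have hbot : Tendsto (fun t => M + σ i * Real.log t) (𝓝[>] 0) atBot :=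
    tendsto_atBot_add_const_left _ _ (Real.tendsto_log_nhdsGT_zero.const_mul_atBot (hσ i))
  obtain ⟨t, hlt, ht⟩ :=
    ((hbot.eventually_lt_atBot (r - s)).and (Ioc_mem_nhdsGT zero_lt_one)).exists
  exact (hslope t ht).not_gt hlt

lemma sub_le_dotProduct (hφ : ProperLSCConvex φ) (hμ : ∀ i, 0 < μ i) (hp : IsKLProxVec φ μ p)
    (hpos : ∀ i, 0 < p i) {r s : ℝ} (hr : φ p = r) (hs : φ σ = s) :
    r - s ≤ (Real.log ∘ p - Real.log ∘ μ) ⬝ᵥ (σ - p) := by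
  have hlim : ∀ i, Tendsto (fun t : ℝ => ((1 - t) • p + t • σ) i) (𝓝[>] 0) (𝓝 (p i)) := by
    intro i
    have hcont : Continuous fun t : ℝ => ((1 - t) • p + t • σ) i := by
      simp only [Pi.add_apply, Pi.smul_apply, smul_eq_mul]
      fun_prop
    simpa using (hcont.tendsto 0).mono_left nhdsWithin_le_nhds
  have hlim_slope : Tendsto
      (fun t : ℝ => (Real.log ∘ ((1 - t) • p + t • σ) - Real.log ∘ μ) ⬝ᵥ (σ - p)) (𝓝[>] 0)
      (𝓝 ((Real.log ∘ p - Real.log ∘ μ) ⬝ᵥ (σ - p))) :=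
    tendsto_finsetSum _ fun i _ => (((hlim i).log (hpos i).ne').sub_const _).mul_const _
  have hsegment_pos : ∀ᶠ t : ℝ in 𝓝[>] 0, ∀ i, 0 < ((1 - t) • p + t • σ) i :=
    eventually_all.2 fun i => (hlim i).eventually_const_lt (hpos i)
  refine ge_of_tendsto hlim_slope ?_
  filter_upwards [hsegment_pos, Ioc_mem_nhdsGT zero_lt_one] with t hw ht
  exact sub_le_dotProduct_segment hφ hμ hp hr hs ht hw

lemma exists_exact_affine_minorant (hφ : ProperLSCConvex φ) (hμ : ∀ i, 0 < μ i)
    (hp : IsKLProxVec φ μ p) (hpos : ∀ i, 0 < p i) (hpφ : φ p ≠ ⊤) :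
    ∃ α : ℝ, φ p = ((α + (Real.log ∘ μ - Real.log ∘ p) ⬝ᵥ p : ℝ) : EReal) ∧
      ∀ σ, ((α + (Real.log ∘ μ - Real.log ∘ p) ⬝ᵥ σ : ℝ) : EReal) ≤ φ σ := by
  obtain ⟨r, hr⟩ := hφ.exists_eq_coe hpφ
  refine ⟨r - (Real.log ∘ μ - Real.log ∘ p) ⬝ᵥ p, by rw [hr, sub_add_cancel], fun σ => ?_⟩
  by_cases hσφ : φ σ = ⊤
  · exact hσφ ▸ le_top
  obtain ⟨s, hs⟩ := hφ.exists_eq_coe hσφ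
  have := sub_le_dotProduct hφ hμ hp hpos hr hs
  rw [← neg_sub (Real.log ∘ μ), neg_dotProduct, dotProduct_sub] at this
  rw [hs, EReal.coe_le_coe_iff]
  linarith

end IsKLProxVec

/-! ### Square-summable sequences -/

lemma norm_le_add_sum_of_norm_sub_le {E : Type*} [SeminormedAddCommGroup E] {v : ℕ → E}
    {b : ℕ → ℝ} (hb : ∀ n, ‖v (n + 2) - v n‖ ≤ b n) (n : ℕ) :
    ‖v n‖ ≤ max ‖v 0‖ ‖v 1‖ + ∑ k ∈ Finset.range n, b k := by
  have hb₀ : ∀ n, 0 ≤ b n := fun n => (norm_nonneg _).trans (hb n)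
  induction n using Nat.twoStepInduction with
  | zero => simp
  | one => simpa using (le_max_right _ _).trans (le_add_of_nonneg_right (hb₀ 0))
  | more n ih _ =>
    rw [Finset.sum_range_succ, Finset.sum_range_succ]
    linarith [norm_le_norm_add_norm_sub' (v (n + 2)) (v n), hb n, hb₀ (n + 1)]

/-- If the product stayed above `ε`, the Cauchy–Schwarz bound on the partial sums would make
`a n ^ 2` dominate a multiple of the harmonic series. -/
lemma frequently_mul_sum_range_lt {a : ℕ → ℝ} (ha : Summable fun n => a n ^ 2) {ε : ℝ}
    (hε : 0 < ε) : ∃ᶠ n in atTop, a n * ∑ k ∈ Finset.range (n + 1), a k < ε := by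
  by_contra hcon
  rw [not_frequently] at hcon
  have hharmonic : ∀ᶠ n : ℕ in atTop,
      ‖ε ^ 2 * (1 / ((n : ℝ) + 1))‖ ≤ a n ^ 2 * ∑' k, a k ^ 2 := by
    filter_upwards [hcon] with n hn
    have hsum : (∑ k ∈ Finset.range (n + 1), a k) ^ 2 ≤ (n + 1) * ∑' k, a k ^ 2 := by
      refine sq_sum_le_card_mul_sum_sq.trans ?_
      rw [Finset.card_range, Nat.cast_add_one]
      gcongr
      exact ha.sum_le_tsum _ fun k _ => sq_nonneg (a k)
    rw [Real.norm_of_nonneg (by positivity), mul_one_div, div_le_iff₀ (by positivity)]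
    calc ε ^ 2 ≤ (a n * ∑ k ∈ Finset.range (n + 1), a k) ^ 2 := by gcongr; exact not_lt.1 hn
      _ = a n ^ 2 * (∑ k ∈ Finset.range (n + 1), a k) ^ 2 := mul_pow _ _ _
      _ ≤ a n ^ 2 * ((n + 1) * ∑' k, a k ^ 2) := by gcongr
      _ = a n ^ 2 * (∑' k, a k ^ 2) * (n + 1) := by ring
  have hsummable := Summable.of_norm_bounded_eventually_nat (ha.mul_right _) hharmonic
  rw [summable_mul_left_iff (by positivity)] at hsummable
  refine Real.not_summable_one_div_natCast ((summable_nat_add_iff 1).1 ?_)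
  simpa using hsummable

lemma exists_strictMono_tendsto_mul_sum_range {a : ℕ → ℝ} (ha₀ : ∀ n, 0 ≤ a n)
    (ha : Summable fun n => a n ^ 2) :
    ∃ ψ : ℕ → ℕ, StrictMono ψ ∧
      Tendsto (fun m => a (ψ m) * ∑ k ∈ Finset.range (ψ m + 1), a k) atTop (𝓝 0) := by
  obtain ⟨ψ, hψ, hlt⟩ := extraction_forall_of_frequently fun m : ℕ =>
    frequently_mul_sum_range_lt ha (Nat.one_div_pos_of_nat (α := ℝ) (n := m))
  exact ⟨ψ, hψ, squeeze_zero
    (fun m => mul_nonneg (ha₀ _) (Finset.sum_nonneg fun k _ => ha₀ k)) (fun m => (hlt m).le)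
    tendsto_one_div_add_atTop_nhds_zero_nat⟩

lemma tendsto_zero_of_summable_sq {a : ℕ → ℝ} (ha : Summable fun n => a n ^ 2) :
    Tendsto a atTop (𝓝 0) := by
  rw [tendsto_zero_iff_abs_tendsto_zero]
  simpa [Function.comp_def, Real.sqrt_sq_eq_abs] using ha.tendsto_atTop_zero.sqrt

lemma abs_dotProduct_le (v w : ι → ℝ) : |v ⬝ᵥ w| ≤ Fintype.card ι * (‖v‖ * ‖w‖) := by
  refine (Finset.abs_sum_le_sum_abs _ _).trans ?_
  rw [← nsmul_eq_mul]
  refine Finset.sum_le_card_nsmul _ _ _ fun i _ => ?_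
  rw [abs_mul]
  exact mul_le_mul (norm_le_pi_norm v i) (norm_le_pi_norm w i) (abs_nonneg _) (norm_nonneg _)

lemma exists_strictMono_tendsto_dotProduct {v d : ℕ → ι → ℝ} {a : ℕ → ℝ} {K L : ℝ}
    (ha₀ : ∀ n, 0 ≤ a n) (ha : Summable fun n => a n ^ 2) (hd : ∀ n, ‖d n‖ ≤ L * a n)
    (hv : ∀ n, ‖v (n + 2) - v n‖ ≤ K * a n) :
    ∃ ψ : ℕ → ℕ, StrictMono ψ ∧ Tendsto (fun k => v (ψ k + 1) ⬝ᵥ d (ψ k)) atTop (𝓝 0) := by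
  obtain ⟨ψ, hψ, hlim⟩ := exists_strictMono_tendsto_mul_sum_range ha₀ ha
  set M := max ‖v 0‖ ‖v 1‖
  have hbound : ∀ n, |v (n + 1) ⬝ᵥ d n| ≤
      Fintype.card ι * L * (M * a n + K * (a n * ∑ k ∈ Finset.range (n + 1), a k)) := by
    intro n
    have hvn := norm_le_add_sum_of_norm_sub_le hv (n + 1)
    rw [← Finset.mul_sum] at hvn
    calc |v (n + 1) ⬝ᵥ d n| ≤ Fintype.card ι * (‖v (n + 1)‖ * ‖d n‖) := abs_dotProduct_le _ _
      _ ≤ Fintype.card ι * ((M + K * ∑ k ∈ Finset.range (n + 1), a k) * (L * a n)) := by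
        gcongr
        · exact (norm_nonneg _).trans hvn
        · exact hd n
      _ = _ := by ring
  refine ⟨ψ, hψ, squeeze_zero_norm (fun k => hbound (ψ k)) ?_⟩
  have haψ := (tendsto_zero_of_summable_sq ha).comp hψ.tendsto_atTop
  simpa using ((haψ.const_mul M).add (hlim.const_mul K)).const_mul (Fintype.card ι * L)

/-! ### Primal-dual trajectories -/

/-- The functional `KL(·|ξ) + φ 0 + φ 1` minimized by Dykstra's algorithm. -/
def dykstraObjective (φ : ℕ → (ι → ℝ) → EReal) (ξ σ : ι → ℝ) : EReal :=
  klVec σ ξ + φ 0 σ + φ 1 σ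

/-- The optimality conditions satisfied by the iterates of Dykstra's algorithm: `v n` is a
subgradient of `φ n` at `x n`, written as an affine minorant with intercept `α n` that is exact at
`x n` (so `α n = -(φ n)^*(v n)`), and `log ξ - v n - v (n + 1)` is the logarithm of `x (n + 1)`. -/
structure IsDykstraTrajectory (φ : ℕ → (ι → ℝ) → EReal) (ξ : ι → ℝ) (x v : ℕ → ι → ℝ)
    (α : ℕ → ℝ) : Prop where
  pos : ∀ n i, 0 < x n i
  minorant : ∀ n σ, ((α n + v n ⬝ᵥ σ : ℝ) : EReal) ≤ φ n σ
  tight : ∀ n, φ n (x n) = ((α n + v n ⬝ᵥ x n : ℝ) : EReal)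
  log_succ : ∀ n, Real.log ∘ x (n + 1) = Real.log ∘ ξ - v n - v (n + 1)

/-- The value `-(φ n)^*(v n) - (φ (n + 1))^*(v (n + 1)) - KL(·|ξ)^*(-v n - v (n + 1))` of the
Fenchel dual of the objective along a trajectory. -/
def dykstraDual (ξ : ι → ℝ) (x : ℕ → ι → ℝ) (α : ℕ → ℝ) (n : ℕ) : ℝ :=
  α n + α (n + 1) + ∑ i, (ξ i - x (n + 1) i)

lemma lowerSemicontinuous_klVec_add_add {f g : (ι → ℝ) → EReal} {ξ : ι → ℝ}
    (hf : ProperLSCConvex f) (hg : ProperLSCConvex g) (hξ : ∀ i, 0 < ξ i) :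
    LowerSemicontinuous fun q : (ι → ℝ) × (ι → ℝ) => (klVec q.2 ξ : EReal) + (f q.1 + g q.2) := by
  have hkl : LowerSemicontinuous fun q : (ι → ℝ) × (ι → ℝ) => (klVec q.2 ξ : EReal) :=
    (continuous_coe_real_ereal.comp
      ((continuous_klVec_left hξ).comp continuous_snd)).lowerSemicontinuous
  refine hkl.add' ((hf.2.2.1.comp continuous_fst).add' (hg.2.2.1.comp continuous_snd)
    fun q => ?_) fun q => ?_
  · exact EReal.continuousAt_add (.inr (hg.1 _)) (.inl (hf.1 _))
  · exact EReal.continuousAt_add (.inl (EReal.coe_ne_top _)) (.inl (EReal.coe_ne_bot _))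

lemma add_succ_eq_of_periodic_two {M : Type*} [AddCommMonoid M] {f : ℕ → M}
    (hf : Function.Periodic f 2) (n : ℕ) : f n + f (n + 1) = f 0 + f 1 := by
  induction n with
  | zero => rfl
  | succ n ih => rw [hf n, add_comm, ih]

lemma dykstraObjective_eq {φ : ℕ → (ι → ℝ) → EReal} (hper : Function.Periodic φ 2)
    (ξ σ : ι → ℝ) (n : ℕ) :
    dykstraObjective φ ξ σ = klVec σ ξ + (φ n σ + φ (n + 1) σ) := by
  rw [dykstraObjective, add_assoc,
    add_succ_eq_of_periodic_two (f := fun n => φ n σ) (fun n => congrFun (hper n) σ) n]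

lemma dykstraObjective_le_of_tendsto {φ : ℕ → (ι → ℝ) → EReal} {ξ σ : ι → ℝ} {D : ℝ}
    {u w : ℕ → ι → ℝ} {m : ℕ → ℕ} {b : ℕ → ℝ} (hφ : ∀ n, ProperLSCConvex (φ n))
    (hper : Function.Periodic φ 2) (hξ : ∀ i, 0 < ξ i) (hu : Tendsto u atTop (𝓝 σ))
    (hw : Tendsto w atTop (𝓝 σ)) (hb : Tendsto b atTop (𝓝 D))
    (hle : ∀ k, (klVec (w k) ξ : EReal) + (φ (m k) (u k) + φ (m k + 1) (w k)) ≤ b k) :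
    dykstraObjective φ ξ σ ≤ D := by
  set G : ℕ → (ι → ℝ) × (ι → ℝ) → EReal :=
    fun n q => (klVec q.2 ξ : EReal) + (φ n q.1 + φ (n + 1) q.2) with hG
  have hGper : Function.Periodic G 2 := fun n => by
    simp only [hG, hper n, add_right_comm n 2 1, hper (n + 1)]
  by_contra! hlt
  obtain ⟨c, hDc, hcσ⟩ := EReal.lt_iff_exists_real_btwn.1 hlt
  have hnear : ∀ n, ∀ᶠ k in atTop, (c : EReal) < G n (u k, w k) := fun n =>
    (hu.prodMk_nhds hw).eventually (lowerSemicontinuous_klVec_add_add (hφ n) (hφ (n + 1)) hξ _ _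
      (hcσ.trans_eq (dykstraObjective_eq hper ξ σ n)))
  obtain ⟨k, h₀, h₁, hbk⟩ := ((hnear 0).and ((hnear 1).and
    (hb.eventually_lt_const (EReal.coe_lt_coe_iff.1 hDc)))).exists
  have hcG : (c : EReal) < G (m k) (u k, w k) := by
    rw [← hGper.map_mod_nat]
    rcases Nat.mod_two_eq_zero_or_one (m k) with h | h <;> rwa [h]
  exact (hcG.trans_le (hle k)).not_gt (EReal.coe_lt_coe_iff.2 hbk)

namespace IsDykstraTrajectory

variable {φ : ℕ → (ι → ℝ) → EReal} {ξ p σ : ι → ℝ} {x v : ℕ → ι → ℝ} {α : ℕ → ℝ} {D : ℝ}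

lemma klVec_add_minorants (h : IsDykstraTrajectory φ ξ x v α) (hξ : ∀ i, 0 < ξ i)
    (σ : ι → ℝ) (n : ℕ) :
    klVec σ ξ + ((α n + v n ⬝ᵥ σ) + (α (n + 1) + v (n + 1) ⬝ᵥ σ)) =
      dykstraDual ξ x α n + klVec σ (x (n + 1)) := by
  rw [klVec_change_reference (h.pos (n + 1)) hξ σ, h.log_succ, dykstraDual]
  simp only [sub_dotProduct]
  ring

lemma dual_add_klVec_le (h : IsDykstraTrajectory φ ξ x v α) (hper : Function.Periodic φ 2)
    (hξ : ∀ i, 0 < ξ i) (σ : ι → ℝ) (n : ℕ) :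
    ((dykstraDual ξ x α n + klVec σ (x (n + 1)) : ℝ) : EReal) ≤ dykstraObjective φ ξ σ := by
  rw [← h.klVec_add_minorants hξ, dykstraObjective_eq hper ξ σ n]
  push_cast
  gcongr
  · exact_mod_cast h.minorant n σ
  · exact_mod_cast h.minorant (n + 1) σ

lemma dual_add_klVec_le_dual_succ (h : IsDykstraTrajectory φ ξ x v α)
    (hper : Function.Periodic φ 2) (hξ : ∀ i, 0 < ξ i) (n : ℕ) :
    dykstraDual ξ x α n + klVec (x (n + 2)) (x (n + 1)) ≤ dykstraDual ξ x α (n + 1) := by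
  have hminorant : α n + v n ⬝ᵥ x (n + 2) ≤ α (n + 2) + v (n + 2) ⬝ᵥ x (n + 2) := by
    have hle := h.minorant n (x (n + 2))
    rw [← hper n, h.tight (n + 2)] at hle
    exact_mod_cast hle
  have hstep := h.klVec_add_minorants hξ (x (n + 2)) (n + 1)
  rw [klVec_self (h.pos (n + 2))] at hstep
  linarith [h.klVec_add_minorants hξ (x (n + 2)) n]

lemma klVec_add_apply_add_apply (h : IsDykstraTrajectory φ ξ x v α) (hξ : ∀ i, 0 < ξ i) (n : ℕ) :
    (klVec (x (n + 1)) ξ : EReal) + (φ n (x n) + φ (n + 1) (x (n + 1))) =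
      ((dykstraDual ξ x α n + v n ⬝ᵥ (x n - x (n + 1)) : ℝ) : EReal) := by
  have hlagrangian := h.klVec_add_minorants hξ (x (n + 1)) n
  rw [klVec_self (h.pos (n + 1))] at hlagrangian
  rw [h.tight n, h.tight (n + 1)]
  norm_cast
  rw [dotProduct_sub]
  linarith

lemma monotone_dual (h : IsDykstraTrajectory φ ξ x v α) (hper : Function.Periodic φ 2)
    (hξ : ∀ i, 0 < ξ i) : Monotone (dykstraDual ξ x α) :=
  monotone_nat_of_le_succ fun n => le_of_add_le_of_nonneg_left
    (h.dual_add_klVec_le_dual_succ hper hξ n)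
    (klVec_nonneg (fun i => (h.pos (n + 2) i).le) (h.pos (n + 1)))

lemma exists_dual_add_klVec_le (h : IsDykstraTrajectory φ ξ x v α)
    (hper : Function.Periodic φ 2) (hξ : ∀ i, 0 < ξ i) (hp : dykstraObjective φ ξ p ≠ ⊤) :
    ∃ F : ℝ, ∀ n, dykstraDual ξ x α n + klVec p (x (n + 1)) ≤ F :=
  ⟨_, fun n => EReal.coe_le_coe_iff.1 <|
    (h.dual_add_klVec_le hper hξ p n).trans (EReal.le_coe_toReal hp)⟩

lemma exists_tendsto_dual (h : IsDykstraTrajectory φ ξ x v α) (hper : Function.Periodic φ 2)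
    (hξ : ∀ i, 0 < ξ i) (hp₀ : 0 ≤ p) (hp : dykstraObjective φ ξ p ≠ ⊤) :
    ∃ D, Tendsto (dykstraDual ξ x α) atTop (𝓝 D) := by
  obtain ⟨F, hF⟩ := h.exists_dual_add_klVec_le hper hξ hp
  refine ⟨_, tendsto_atTop_ciSup (h.monotone_dual hper hξ) ⟨F, ?_⟩⟩
  rintro _ ⟨n, rfl⟩
  exact le_of_add_le_of_nonneg_left (hF n) (klVec_nonneg hp₀ (h.pos (n + 1)))

lemma exists_mem_Icc (h : IsDykstraTrajectory φ ξ x v α) (hper : Function.Periodic φ 2)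
    (hξ : ∀ i, 0 < ξ i) (hp₀ : ∀ i, 0 < p i) (hp : dykstraObjective φ ξ p ≠ ⊤) :
    ∃ c C : ℝ, 0 < c ∧ ∀ n i, x (n + 1) i ∈ Set.Icc c C := by
  obtain ⟨F, hF⟩ := h.exists_dual_add_klVec_le hper hξ hp
  obtain ⟨c, C, hc, hbound⟩ := exists_bounds_of_klVec_le hp₀ (F - dykstraDual ξ x α 0)
  refine ⟨c, C, hc, fun n => hbound _ (h.pos (n + 1)) ?_⟩
  linarith [hF n, h.monotone_dual hper hξ n.zero_le]

lemma summable_klVec_step (h : IsDykstraTrajectory φ ξ x v α) (hper : Function.Periodic φ 2)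
    (hξ : ∀ i, 0 < ξ i) (hD : Tendsto (dykstraDual ξ x α) atTop (𝓝 D)) :
    Summable fun n => klVec (x (n + 2)) (x (n + 1)) := by
  refine summable_of_sum_range_le (c := D - dykstraDual ξ x α 0)
    (fun n => klVec_nonneg (fun i => (h.pos (n + 2) i).le) (h.pos (n + 1))) fun n => ?_
  calc ∑ k ∈ Finset.range n, klVec (x (k + 2)) (x (k + 1))
      ≤ ∑ k ∈ Finset.range n, (dykstraDual ξ x α (k + 1) - dykstraDual ξ x α k) :=
        Finset.sum_le_sum fun k _ => by linarith [h.dual_add_klVec_le_dual_succ hper hξ k]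
    _ = dykstraDual ξ x α n - dykstraDual ξ x α 0 := Finset.sum_range_sub _ n
    _ ≤ D - dykstraDual ξ x α 0 := by
        gcongr
        exact (h.monotone_dual hper hξ).ge_of_tendsto hD n

lemma summable_sq_sqrt_klVec_step (h : IsDykstraTrajectory φ ξ x v α)
    (hper : Function.Periodic φ 2) (hξ : ∀ i, 0 < ξ i)
    (hD : Tendsto (dykstraDual ξ x α) atTop (𝓝 D)) :
    Summable fun n => √(klVec (x (n + 2)) (x (n + 1))) ^ 2 :=
  (h.summable_klVec_step hper hξ hD).congr fun n =>
    (Real.sq_sqrt (klVec_nonneg (fun i => (h.pos (n + 2) i).le) (h.pos (n + 1)))).symm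

lemma norm_step_le (h : IsDykstraTrajectory φ ξ x v α) {C : ℝ} (hx : ∀ n i, x (n + 1) i ≤ C)
    (n : ℕ) : ‖x (n + 1) - x (n + 2)‖ ≤ 2 * √C * √(klVec (x (n + 2)) (x (n + 1))) := by
  rw [norm_sub_rev]
  exact norm_sub_le_sqrt_klVec (fun i => (h.pos (n + 2) i).le) (h.pos (n + 1)) (hx (n + 1)) (hx n)

lemma norm_dual_step_le (h : IsDykstraTrajectory φ ξ x v α) {c : ℝ} (hc : 0 < c)
    (hx : ∀ n i, c ≤ x (n + 1) i) (n : ℕ) :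
    ‖v (n + 2) - v n‖ ≤ ‖x (n + 1) - x (n + 2)‖ / c := by
  have hlog : v (n + 2) - v n = Real.log ∘ x (n + 1) - Real.log ∘ x (n + 2) := by
    rw [h.log_succ n, h.log_succ (n + 1)]
    abel
  rw [hlog]
  exact norm_log_sub_log_le hc (hx n) (hx (n + 1))

lemma tendsto_step (h : IsDykstraTrajectory φ ξ x v α) (hper : Function.Periodic φ 2)
    (hξ : ∀ i, 0 < ξ i) (hD : Tendsto (dykstraDual ξ x α) atTop (𝓝 D)) {C : ℝ}
    (hx : ∀ n i, x (n + 1) i ≤ C) : Tendsto (fun n => x (n + 1) - x (n + 2)) atTop (𝓝 0) := by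
  have hsqrt := tendsto_zero_of_summable_sq (h.summable_sq_sqrt_klVec_step hper hξ hD)
  exact squeeze_zero_norm (h.norm_step_le hx) (by simpa using hsqrt.const_mul (2 * √C))

lemma exists_strictMono_tendsto_gap (h : IsDykstraTrajectory φ ξ x v α)
    (hper : Function.Periodic φ 2) (hξ : ∀ i, 0 < ξ i)
    (hD : Tendsto (dykstraDual ξ x α) atTop (𝓝 D)) {c C : ℝ} (hc : 0 < c)
    (hx : ∀ n i, x (n + 1) i ∈ Set.Icc c C) :
    ∃ ψ : ℕ → ℕ, StrictMono ψ ∧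
      Tendsto (fun k => v (ψ k + 1) ⬝ᵥ (x (ψ k + 1) - x (ψ k + 2))) atTop (𝓝 0) := by
  have hstep := h.norm_step_le fun n i => (hx n i).2
  refine exists_strictMono_tendsto_dotProduct (K := 2 * √C / c)
    (d := fun n => x (n + 1) - x (n + 2)) (fun _ => Real.sqrt_nonneg _)
    (h.summable_sq_sqrt_klVec_step hper hξ hD) hstep fun n => ?_
  calc ‖v (n + 2) - v n‖ ≤ ‖x (n + 1) - x (n + 2)‖ / c :=
        h.norm_dual_step_le hc (fun n i => (hx n i).1) n
    _ ≤ 2 * √C * √(klVec (x (n + 2)) (x (n + 1))) / c := by gcongr; exact hstep n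
    _ = 2 * √C / c * √(klVec (x (n + 2)) (x (n + 1))) := (div_mul_eq_mul_div ..).symm

lemma exists_dykstraObjective_le (h : IsDykstraTrajectory φ ξ x v α)
    (hφ : ∀ n, ProperLSCConvex (φ n)) (hper : Function.Periodic φ 2) (hξ : ∀ i, 0 < ξ i)
    (hp₀ : ∀ i, 0 < p i) (hp : dykstraObjective φ ξ p ≠ ⊤)
    (hD : Tendsto (dykstraDual ξ x α) atTop (𝓝 D)) :
    ∃ σ, 0 ≤ σ ∧ dykstraObjective φ ξ σ ≤ D := by
  obtain ⟨c, C, hc, hx⟩ := h.exists_mem_Icc hper hξ hp₀ hp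
  have hstep := h.tendsto_step hper hξ hD fun n i => (hx n i).2
  obtain ⟨ψ, hψ, hgap⟩ := h.exists_strictMono_tendsto_gap hper hξ hD hc hx
  have hbox : ∀ k, x (ψ k + 1) ∈ Set.Icc (fun _ => c) (fun _ => C) := fun k =>
    ⟨fun i => (hx (ψ k) i).1, fun i => (hx (ψ k) i).2⟩
  obtain ⟨σ, hσ, θ, hθ, hlim⟩ := isCompact_Icc.tendsto_subseq hbox
  have hψθ : Tendsto (ψ ∘ θ) atTop atTop := (hψ.comp hθ).tendsto_atTop
  have hlim_succ : Tendsto (fun k => x (ψ (θ k) + 2)) atTop (𝓝 σ) := by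
    simpa [Function.comp_def] using hlim.sub (hstep.comp hψθ)
  have hvalue : Tendsto (fun k => dykstraDual ξ x α (ψ (θ k) + 1) +
      v (ψ (θ k) + 1) ⬝ᵥ (x (ψ (θ k) + 1) - x (ψ (θ k) + 2))) atTop (𝓝 D) := by
    simpa [Function.comp_def] using
      (hD.comp ((tendsto_add_atTop_nat 1).comp hψθ)).add (hgap.comp hθ.tendsto_atTop)
  exact ⟨σ, fun i => hc.le.trans (hσ.1 i), dykstraObjective_le_of_tendsto hφ hper hξ hlim hlim_succ
    hvalue fun k => (h.klVec_add_apply_add_apply hξ (ψ (θ k) + 1)).le⟩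

lemma le_dykstraObjective (h : IsDykstraTrajectory φ ξ x v α) (hper : Function.Periodic φ 2)
    (hξ : ∀ i, 0 < ξ i) (hD : Tendsto (dykstraDual ξ x α) atTop (𝓝 D)) (hσ : 0 ≤ σ) :
    (D : EReal) ≤ dykstraObjective φ ξ σ :=
  le_of_tendsto' ((continuous_coe_real_ereal.tendsto D).comp hD) fun n =>
    (EReal.coe_le_coe_iff.2 (le_add_of_nonneg_right (klVec_nonneg hσ (h.pos (n + 1))))).trans
      (h.dual_add_klVec_le hper hξ σ n)

lemma tendsto_of_dykstraObjective_le (h : IsDykstraTrajectory φ ξ x v α)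
    (hper : Function.Periodic φ 2) (hξ : ∀ i, 0 < ξ i)
    (hD : Tendsto (dykstraDual ξ x α) atTop (𝓝 D)) (hσ : 0 ≤ σ)
    (hσD : dykstraObjective φ ξ σ ≤ D) : Tendsto x atTop (𝓝 σ) := by
  have hkl : ∀ n, klVec σ (x (n + 1)) ≤ D - dykstraDual ξ x α n := fun n =>
    le_sub_iff_add_le'.2 <| EReal.coe_le_coe_iff.1 <|
      (h.dual_add_klVec_le hper hξ σ n).trans hσD
  refine (tendsto_add_atTop_iff_nat 1).1 <| tendsto_of_tendsto_klVec (fun n => h.pos (n + 1)) hσ <|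
    squeeze_zero (fun n => klVec_nonneg hσ (h.pos (n + 1))) hkl ?_
  simpa using hD.const_sub D

theorem exists_isMinOn_tendsto (h : IsDykstraTrajectory φ ξ x v α)
    (hφ : ∀ n, ProperLSCConvex (φ n)) (hper : Function.Periodic φ 2) (hξ : ∀ i, 0 < ξ i)
    (hp₀ : ∀ i, 0 < p i) (hp : dykstraObjective φ ξ p ≠ ⊤) :
    ∃ xs, 0 ≤ xs ∧ IsMinOn (dykstraObjective φ ξ) (Set.Ici 0) xs ∧
      (∀ σ, 0 ≤ σ → IsMinOn (dykstraObjective φ ξ) (Set.Ici 0) σ → σ = xs) ∧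
      Tendsto x atTop (𝓝 xs) := by
  obtain ⟨D, hD⟩ := h.exists_tendsto_dual hper hξ (fun i => (hp₀ i).le) hp
  obtain ⟨xs, hxs, hxsD⟩ := h.exists_dykstraObjective_le hφ hper hξ hp₀ hp hD
  have hlim := h.tendsto_of_dykstraObjective_le hper hξ hD hxs hxsD
  refine ⟨xs, hxs, fun σ hσ => hxsD.trans (h.le_dykstraObjective hper hξ hD hσ),
    fun σ hσ hmin => ?_, hlim⟩
  have hσD : dykstraObjective φ ξ σ ≤ D := (hmin hxs : _ ≤ dykstraObjective φ ξ xs).trans hxsD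
  exact tendsto_nhds_unique (h.tendsto_of_dykstraObjective_le hper hξ hD hσ hσD) hlim

end IsDykstraTrajectory

/-! ### Dykstra's algorithm -/

/-- Dykstra's algorithm for `KL(·|ξ)`, with `φ n` the function used at step `n + 1`. The auxiliary
sequence is shifted by one, `z n` being `z^{(n - 1)}`, so that it starts at index `0`. -/
structure IsDykstraSeq (φ : ℕ → (ι → ℝ) → EReal) (ξ : ι → ℝ) (π z : ℕ → ι → ℝ) : Prop where
  zero : π 0 = ξ
  aux_zero : z 0 = 1
  aux_one : z 1 = 1
  prox : ∀ n, IsKLProxVec (φ n) (π n * z n) (π (n + 1))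
  aux_step : ∀ n, z (n + 2) = z n * π n / π (n + 1)

namespace IsDykstraSeq

variable {φ : ℕ → (ι → ℝ) → EReal} {ξ p : ι → ℝ} {π z : ℕ → ι → ℝ}

lemma pos_and_aux_pos (h : IsDykstraSeq φ ξ π z) (hφ : ∀ n, ProperLSCConvex (φ n))
    (hξ : ∀ i, 0 < ξ i) (hp₀ : ∀ i, 0 < p i) (hp : ∀ n, φ n p ≠ ⊤) (n : ℕ) :
    (∀ i, 0 < π n i) ∧ (∀ i, 0 < z n i) ∧ ∀ i, 0 < z (n + 1) i := by
  induction n with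
  | zero => simpa [h.zero, h.aux_zero, h.aux_one] using hξ
  | succ n ih =>
    obtain ⟨hπ, hz, hz'⟩ := ih
    have hπ' := (h.prox n).pos (hφ n) (fun i => mul_pos (hπ i) (hz i)) hp₀ (hp n)
    refine ⟨hπ', hz', fun i => ?_⟩
    rw [h.aux_step n]
    exact div_pos (mul_pos (hz i) (hπ i)) (hπ' i)

lemma mul_aux_mul_aux_succ (h : IsDykstraSeq φ ξ π z) (hπ : ∀ n i, 0 < π n i) (n : ℕ) :
    π n * (z n * z (n + 1)) = ξ := by
  induction n with
  | zero => simp [h.zero, h.aux_zero, h.aux_one]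
  | succ n ih =>
    rw [← ih, h.aux_step n]
    ext i
    have := (hπ (n + 1) i).ne'
    simp only [Pi.mul_apply, Pi.div_apply]
    field_simp

lemma log_mul_sub_log (h : IsDykstraSeq φ ξ π z) (hπ : ∀ n i, 0 < π n i)
    (hz : ∀ n i, 0 < z n i) (n : ℕ) :
    Real.log ∘ (π n * z n) - Real.log ∘ π (n + 1) = Real.log ∘ z (n + 2) := by
  ext i
  simp only [h.aux_step n, Pi.sub_apply, Function.comp_apply, Pi.mul_apply, Pi.div_apply]
  rw [Real.log_div (mul_pos (hz n i) (hπ n i)).ne' (hπ (n + 1) i).ne', mul_comm]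

lemma log_eq (h : IsDykstraSeq φ ξ π z) (hπ : ∀ n i, 0 < π n i) (hz : ∀ n i, 0 < z n i)
    (n : ℕ) : Real.log ∘ π n = Real.log ∘ ξ - Real.log ∘ z n - Real.log ∘ z (n + 1) := by
  rw [← h.mul_aux_mul_aux_succ hπ n]
  ext i
  simp only [Pi.sub_apply, Function.comp_apply, Pi.mul_apply]
  rw [Real.log_mul (hπ n i).ne' (mul_pos (hz n i) (hz (n + 1) i)).ne',
    Real.log_mul (hz n i).ne' (hz (n + 1) i).ne']
  ring

lemma exists_isDykstraTrajectory (h : IsDykstraSeq φ ξ π z) (hφ : ∀ n, ProperLSCConvex (φ n))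
    (hξ : ∀ i, 0 < ξ i) (hp₀ : ∀ i, 0 < p i) (hp : ∀ n, φ n p ≠ ⊤) :
    ∃ α, IsDykstraTrajectory φ ξ (fun n => π (n + 1)) (fun n => Real.log ∘ z (n + 2)) α := by
  have hπ : ∀ n i, 0 < π n i := fun n => (h.pos_and_aux_pos hφ hξ hp₀ hp n).1
  have hz : ∀ n i, 0 < z n i := fun n => (h.pos_and_aux_pos hφ hξ hp₀ hp n).2.1
  have hμ : ∀ n i, 0 < (π n * z n) i := fun n i => mul_pos (hπ n i) (hz n i)
  choose α hexact hminorant using fun n =>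
    (h.prox n).exists_exact_affine_minorant (hφ n) (hμ n) (hπ (n + 1))
      ((h.prox n).apply_ne_top (fun i => (hp₀ i).le) (hp n))
  simp only [h.log_mul_sub_log hπ hz] at hexact hminorant
  exact ⟨α, fun n => hπ (n + 1), hminorant, hexact, fun n => h.log_eq hπ hz (n + 2)⟩

end IsDykstraSeq

theorem dykstra_KL_converges_general {φ : ℕ → (ι → ℝ) → EReal} {ξ p : ι → ℝ} {π z : ℕ → ι → ℝ}
    (hφ : ∀ n, ProperLSCConvex (φ n)) (hper : Function.Periodic φ 2) (hξ : ∀ i, 0 < ξ i)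
    (hp₀ : ∀ i, 0 < p i) (hp : ∀ n, φ n p ≠ ⊤) (h : IsDykstraSeq φ ξ π z) :
    (∀ n i, 0 < π n i) ∧
      ∃ πs, 0 ≤ πs ∧ IsMinOn (dykstraObjective φ ξ) (Set.Ici 0) πs ∧
        (∀ σ, 0 ≤ σ → IsMinOn (dykstraObjective φ ξ) (Set.Ici 0) σ → σ = πs) ∧
        Tendsto π atTop (𝓝 πs) := by
  obtain ⟨α, htraj⟩ := h.exists_isDykstraTrajectory hφ hξ hp₀ hp
  have hp_ne_top : dykstraObjective φ ξ p ≠ ⊤ :=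
    EReal.add_ne_top (EReal.add_ne_top (EReal.coe_ne_top _) (hp 0)) (hp 1)
  obtain ⟨πs, hπs, hmin, huniq, hlim⟩ := htraj.exists_isMinOn_tendsto hφ hper hξ hp₀ hp_ne_top
  exact ⟨fun n => (h.pos_and_aux_pos hφ hξ hp₀ hp n).1, πs, hπs, hmin, huniq,
    (tendsto_add_atTop_iff_nat 1).1 hlim⟩

end Vectors

/-! ### Matrices as vectors -/

lemma klVec_uncurry {N : ℕ} (π ξ : Fin N → Fin N → ℝ) :
    klVec (Function.uncurry π) (Function.uncurry ξ) = KLmat π ξ :=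
  Fintype.sum_prod_type _

lemma ProperLSCConvex.comp_curry {κ κ' : Type*} {f : (κ → κ' → ℝ) → EReal}
    (hf : ProperLSCConvex f) : ProperLSCConvex fun q : κ × κ' → ℝ => f (Function.curry q) :=
  ⟨fun _ => hf.1 _, hf.2.1.imp' Function.uncurry fun _ => id,
    hf.2.2.1.comp (continuous_pi fun i => continuous_pi fun j => continuous_apply (i, j)),
    fun _ _ => hf.2.2.2 _ _⟩

lemma IsKLProx.isKLProxVec {N : ℕ} {f : (Fin N → Fin N → ℝ) → EReal} {μ π : Fin N → Fin N → ℝ}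
    (h : IsKLProx f μ π) :
    IsKLProxVec (fun q => f (Function.curry q)) (Function.uncurry μ) (Function.uncurry π) :=
  ⟨fun k => h.1 k.1 k.2, isMinOn_iff.2 fun σ hσ => by
    simpa only [← klVec_uncurry, Function.uncurry_curry, Function.curry_uncurry] using
      h.2 (Function.curry σ) fun i j => hσ (i, j)⟩

/-- The functions used by the alternating steps, on matrices regarded as vectors: `φ₁` at the odd
steps `n + 1` and `φ₂` at the even ones. -/
def alternating {N : ℕ} (φ₁ φ₂ : (Fin N → Fin N → ℝ) → EReal) (n : ℕ)
    (q : Fin N × Fin N → ℝ) : EReal :=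
  (if Odd (n + 1) then φ₁ else φ₂) (Function.curry q)

section Alternating

variable {N : ℕ} {φ₁ φ₂ : (Fin N → Fin N → ℝ) → EReal}

lemma periodic_alternating : Function.Periodic (alternating φ₁ φ₂) 2 := fun n => by
  funext q
  simp [alternating, Nat.odd_add, parity_simps]

lemma properLSCConvex_alternating (hφ₁ : ProperLSCConvex φ₁) (hφ₂ : ProperLSCConvex φ₂) (n : ℕ) :
    ProperLSCConvex (alternating φ₁ φ₂ n) :=
  ProperLSCConvex.comp_curry (by split_ifs <;> assumption)

lemma alternating_ne_top {p : Fin N → Fin N → ℝ} (h₁ : φ₁ p ≠ ⊤) (h₂ : φ₂ p ≠ ⊤) (n : ℕ) :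
    alternating φ₁ φ₂ n (Function.uncurry p) ≠ ⊤ := by
  rw [alternating, Function.curry_uncurry]
  split_ifs <;> assumption

lemma dykstraObjective_alternating (ξ σ : Fin N → Fin N → ℝ) :
    dykstraObjective (alternating φ₁ φ₂) (Function.uncurry ξ) (Function.uncurry σ) =
      KLmat σ ξ + φ₁ σ + φ₂ σ := by
  have h₂ : ¬Odd 2 := by decide
  simp [dykstraObjective, alternating, klVec_uncurry, h₂]

lemma isMinOn_dykstraObjective_alternating {ξ σ : Fin N → Fin N → ℝ} :
    IsMinOn (dykstraObjective (alternating φ₁ φ₂) (Function.uncurry ξ)) (Set.Ici 0)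
        (Function.uncurry σ) ↔
      ∀ σ' : Fin N → Fin N → ℝ, (∀ i j, 0 ≤ σ' i j) →
        (KLmat σ ξ : EReal) + φ₁ σ + φ₂ σ ≤ KLmat σ' ξ + φ₁ σ' + φ₂ σ' := by
  simp only [isMinOn_iff, (Equiv.curry _ _ _).symm.surjective.forall, Set.mem_Ici, Pi.le_def,
    Prod.forall, Equiv.curry_symm_apply, dykstraObjective_alternating]
  rfl

end Alternating

/-- Convergence of Dykstra's algorithm for the KL divergence.
Here `z k` encodes `z^{(k-1)}`, so that `z 0 = z^{(-1)}` and `z 1 = z^{(0)}`. -/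
theorem dykstra_KL_converges {N : ℕ} (hN : 1 ≤ N)
    (ξ : Fin N → Fin N → ℝ) (hξ : ∀ i j, 0 < ξ i j)
    (φ₁ φ₂ : (Fin N → Fin N → ℝ) → EReal)
    (hφ₁ : ProperLSCConvex φ₁) (hφ₂ : ProperLSCConvex φ₂)
    (hqual : (intrinsicInterior ℝ {π | φ₁ π ≠ ⊤} ∩ intrinsicInterior ℝ {π | φ₂ π ≠ ⊤} ∩
      {π : Fin N → Fin N → ℝ | ∀ i j, 0 < π i j}).Nonempty)
    (π : ℕ → Fin N → Fin N → ℝ) (z : ℕ → Fin N → Fin N → ℝ)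
    (hπ0 : π 0 = ξ)
    (hz0 : z 0 = fun _ _ => 1) (hz1 : z 1 = fun _ _ => 1)
    (hπrec : ∀ ℓ : ℕ, 1 ≤ ℓ →
      IsKLProx (if Odd ℓ then φ₁ else φ₂)
        (fun i j => π (ℓ - 1) i j * z (ℓ - 1) i j) (π ℓ))
    (hzrec : ∀ ℓ : ℕ, 1 ≤ ℓ →
      z (ℓ + 1) = fun i j => z (ℓ - 1) i j * π (ℓ - 1) i j / π ℓ i j) :
    (∀ ℓ : ℕ, ∀ i j, 0 < π ℓ i j) ∧
      ∃ πs : Fin N → Fin N → ℝ,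
        (∀ i j, 0 ≤ πs i j) ∧
        (∀ σ : Fin N → Fin N → ℝ, (∀ i j, 0 ≤ σ i j) →
          ((KLmat πs ξ : ℝ) : EReal) + φ₁ πs + φ₂ πs ≤
            ((KLmat σ ξ : ℝ) : EReal) + φ₁ σ + φ₂ σ) ∧
        (∀ σ : Fin N → Fin N → ℝ, (∀ i j, 0 ≤ σ i j) →
          (∀ σ' : Fin N → Fin N → ℝ, (∀ i j, 0 ≤ σ' i j) →
            ((KLmat σ ξ : ℝ) : EReal) + φ₁ σ + φ₂ σ ≤
              ((KLmat σ' ξ : ℝ) : EReal) + φ₁ σ' + φ₂ σ') → σ = πs) ∧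
        Tendsto π atTop (𝓝 πs) := by
  obtain ⟨p, ⟨hp₁, hp₂⟩, hp₀⟩ := hqual
  have hseq : IsDykstraSeq (alternating φ₁ φ₂) (Function.uncurry ξ)
      (fun n => Function.uncurry (π n)) (fun n => Function.uncurry (z n)) :=
    { zero := congrArg _ hπ0
      aux_zero := congrArg _ hz0
      aux_one := congrArg _ hz1
      prox := fun n => (hπrec (n + 1) n.succ_pos).isKLProxVec
      aux_step := fun n => congrArg _ (hzrec (n + 1) n.succ_pos) }
  obtain ⟨hpos, πs, hπs, hmin, huniq, hlim⟩ := dykstra_KL_converges_general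
    (properLSCConvex_alternating hφ₁ hφ₂) periodic_alternating (fun k => hξ k.1 k.2)
    (fun k => hp₀ k.1 k.2)
    (alternating_ne_top (intrinsicInterior_subset hp₁) (intrinsicInterior_subset hp₂)) hseq
  exact ⟨fun ℓ i j => hpos ℓ (i, j), Function.curry πs, fun i j => hπs (i, j),
    isMinOn_dykstraObjective_alternating.1 hmin,
    fun σ hσ hσmin => congrArg Function.curry
      (huniq (Function.uncurry σ) (fun k => hσ k.1 k.2)
        (isMinOn_dykstraObjective_alternating.2 hσmin)),
    tendsto_pi_nhds.2 fun i => tendsto_pi_nhds.2 fun j => tendsto_pi_nhds.1 hlim (i, j)⟩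
end
end

section
/- Let N ≥ 1, let π ∈ ℝ^{N×N} have strictly positive entries, and let q ∈ ℝ^N have strictly positive entries. Then the unique minimizer of π̃ ↦ KL(π̃|π) over the set C_q = {π̃ ∈ ℝ_+^{N×N} : π̃^T𝟙 = q} is given by the column rescaling π̃_{ij} = π_{ij} · q_j / (Σ_k π_{kj}); in matrix form, Prox^{KL}_{ι_{C_q}}(π) = π · diag(q ⊘ (π^T𝟙)). -/
open scoped BigOperators

noncomputable section

/-- `x` is the unique minimizer of `F` over `S`. -/
def IsUniqMinOn {α β : Type*} [Preorder β] (F : α → β) (S : Set α) (x : α) : Prop :=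
  x ∈ S ∧ (∀ y ∈ S, F x ≤ F y) ∧ ∀ y ∈ S, (∀ z ∈ S, F y ≤ F z) → y = x

/-!
Both the objective and the constraint split over columns, so each column can be treated on its own.
For a single column `p` with total mass `P`, the divergence of `a` from `p` is `P` times the average
of `x log x + 1 - x` at the ratios `a i / p i` with weights `p i / P`. Fixing the sum of `a` fixes
the mean of these ratios, so by strict convexity (the equality case of Jensen's inequality) the
unique minimum is attained when all ratios are equal. The same argument works for every
`f`-divergence with `f` strictly convex.
-/

open Set InformationTheory

section UniqueMinimizer

variable {α β γ : Type*} [Preorder γ] {F : α → γ} {S : Set α} {x : α}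

theorem isUniqMinOn_iff_forall_ne_lt :
    IsUniqMinOn F S x ↔ x ∈ S ∧ ∀ y ∈ S, y ≠ x → F x < F y := by
  constructor
  · rintro ⟨hx, hmin, huniq⟩
    refine ⟨hx, fun y hy hne => lt_of_le_not_ge (hmin y hy) fun hyx => hne ?_⟩
    exact huniq y hy fun z hz => hyx.trans (hmin z hz)
  · rintro ⟨hx, hlt⟩
    refine ⟨hx, fun y hy => ?_, fun y hy hmin => ?_⟩
    · rcases eq_or_ne y x with rfl | hne
      · exact le_rfl
      · exact (hlt y hy hne).le
    · by_contra hne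
      exact (hlt y hy hne).not_ge (hmin x hx)

theorem IsUniqMinOn.comp_equiv (h : IsUniqMinOn F S x) (e : β ≃ α) :
    IsUniqMinOn (F ∘ e) (e ⁻¹' S) (e.symm x) := by
  rw [isUniqMinOn_iff_forall_ne_lt] at h ⊢
  obtain ⟨hx, hlt⟩ := h
  refine ⟨by simpa using hx, fun y hy hne => ?_⟩
  simpa using hlt (e y) hy fun hyx => hne (e.eq_symm_apply.mpr hyx)

theorem isUniqMinOn_sum_pi {κ M : Type*} [Fintype κ] {X : κ → Type*}
    [AddCommMonoid M] [PartialOrder M] [IsOrderedCancelAddMonoid M]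
    {G : ∀ j, X j → M} {T : ∀ j, Set (X j)} {x : ∀ j, X j}
    (h : ∀ j, IsUniqMinOn (G j) (T j) (x j)) :
    IsUniqMinOn (fun y => ∑ j, G j (y j)) (univ.pi T) x := by
  refine isUniqMinOn_iff_forall_ne_lt.mpr ⟨fun j _ => (h j).1, fun y hy hne => ?_⟩
  obtain ⟨k, hk⟩ := Function.ne_iff.mp hne
  exact Finset.sum_lt_sum (fun j _ => (h j).2.1 (y j) (hy j trivial))
    ⟨k, Finset.mem_univ k, (isUniqMinOn_iff_forall_ne_lt.mp (h k)).2 (y k) (hy k trivial) hk⟩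

end UniqueMinimizer

section FDivergence

variable {ι κ : Type*} [Fintype ι] [Fintype κ] {f : ℝ → ℝ} {s : Set ℝ} {a p : ι → ℝ}

/-- The `f`-divergence `∑ i, p i * f (a i / p i)` of the vector `a` from the vector `p`, which need
not be normalized. It is meaningful for `p` with nonzero entries: where `p i = 0` the term
vanishes. -/
def fDiv (f : ℝ → ℝ) (a p : ι → ℝ) : ℝ :=
  ∑ i, p i * f (a i / p i)

theorem fDiv_mul_const (hp : ∀ i, p i ≠ 0) (c : ℝ) :
    fDiv f (fun i => p i * c) p = (∑ i, p i) * f c := by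
  simp only [fDiv, mul_div_cancel_left₀ _ (hp _), Finset.sum_mul]

theorem sum_mul_map_div_lt_fDiv (hf : StrictConvexOn ℝ s f) (hp : ∀ i, 0 < p i)
    (hs : ∀ i, a i / p i ∈ s) (hne : ∃ i, a i / p i ≠ (∑ k, a k) / ∑ k, p k) :
    (∑ i, p i) * f ((∑ i, a i) / ∑ i, p i) < fDiv f a p := by
  obtain ⟨i, hi⟩ := hne
  set P := ∑ k, p k
  have hP : 0 < P := Finset.sum_pos (fun k _ => hp k) ⟨i, Finset.mem_univ i⟩
  have weights_sum : ∑ k, p k / P = 1 := by rw [← Finset.sum_div, div_self hP.ne']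
  have mean_ratio : ∑ k, p k / P * (a k / p k) = (∑ k, a k) / P := by
    rw [Finset.sum_div]
    exact Finset.sum_congr rfl fun k _ => by field_simp [(hp k).ne']
  have jensen : f (∑ k, p k / P * (a k / p k)) < ∑ k, p k / P * f (a k / p k) :=
    (hf.map_sum_lt_iff_of_pos' (fun k _ => div_pos (hp k) hP) weights_sum fun k _ => hs k).mpr
      ⟨i, Finset.mem_univ i, by simpa only [smul_eq_mul, mean_ratio] using hi⟩
  calc P * f ((∑ k, a k) / P) = P * f (∑ k, p k / P * (a k / p k)) := by rw [mean_ratio]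
    _ < P * ∑ k, p k / P * f (a k / p k) := mul_lt_mul_of_pos_left jensen hP
    _ = fDiv f a p := by
      rw [fDiv, Finset.mul_sum]
      exact Finset.sum_congr rfl fun k _ => by field_simp

theorem isUniqMinOn_fDiv_sum_eq [Nonempty ι] (hf : StrictConvexOn ℝ (Ici 0) f)
    (hp : ∀ i, 0 < p i) {m : ℝ} (hm : 0 ≤ m) :
    IsUniqMinOn (fun a => fDiv f a p) {a : ι → ℝ | (∀ i, 0 ≤ a i) ∧ ∑ i, a i = m}
      (fun i => p i * m / ∑ k, p k) := by
  have hP : 0 < ∑ i, p i := Finset.sum_pos (fun i _ => hp i) Finset.univ_nonempty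
  simp only [mul_div_assoc]
  refine isUniqMinOn_iff_forall_ne_lt.mpr ⟨⟨fun i => ?_, ?_⟩, ?_⟩
  · exact mul_nonneg (hp i).le (div_nonneg hm hP.le)
  · rw [← Finset.sum_mul, mul_div_cancel₀ _ hP.ne']
  · rintro a ⟨ha, rfl⟩ hne
    rw [fDiv_mul_const fun i => (hp i).ne']
    refine sum_mul_map_div_lt_fDiv hf hp (fun i => div_nonneg (ha i) (hp i).le) ?_
    obtain ⟨i, hi⟩ := Function.ne_iff.mp hne
    exact ⟨i, fun hratio => hi (((div_eq_iff (hp i).ne').mp hratio).trans (mul_comm _ _))⟩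

theorem KL_proj_col_marginal_general [Nonempty ι] (hf : StrictConvexOn ℝ (Ici 0) f)
    {π : ι → κ → ℝ} (hπ : ∀ i j, 0 < π i j) {q : κ → ℝ} (hq : ∀ j, 0 ≤ q j) :
    IsUniqMinOn (fun σ : ι → κ → ℝ => ∑ j, fDiv f (fun i => σ i j) (fun i => π i j))
      {σ : ι → κ → ℝ | (∀ i j, 0 ≤ σ i j) ∧ ∀ j, ∑ i, σ i j = q j}
      (fun i j => π i j * q j / ∑ k, π k j) := by
  let transpose : (ι → κ → ℝ) ≃ (κ → ι → ℝ) := Equiv.piComm fun _ _ => ℝ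
  have constraint_eq_pi : {σ : ι → κ → ℝ | (∀ i j, 0 ≤ σ i j) ∧ ∀ j, ∑ i, σ i j = q j} =
      transpose ⁻¹' univ.pi fun j => {a : ι → ℝ | (∀ i, 0 ≤ a i) ∧ ∑ i, a i = q j} := by
    ext σ
    simp [transpose, Function.swap, forall_and, forall_comm (α := ι)]
  rw [constraint_eq_pi]
  exact (isUniqMinOn_sum_pi fun j =>
    isUniqMinOn_fDiv_sum_eq hf (fun i => hπ i j) (hq j)).comp_equiv transpose

end FDivergence

theorem mul_klFun_div {b : ℝ} (hb : b ≠ 0) (a : ℝ) :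
    b * klFun (a / b) = a * Real.log (a / b) - a + b := by
  rw [klFun_apply]
  field_simp
  ring

theorem KLmat_eq_sum_fDiv_klFun {N : ℕ} {π : Fin N → Fin N → ℝ} (hπ : ∀ i j, π i j ≠ 0)
    (σ : Fin N → Fin N → ℝ) :
    KLmat σ π = ∑ j, fDiv klFun (fun i => σ i j) (fun i => π i j) := by
  simp only [KLmat, fDiv, mul_klFun_div (hπ _ _)]
  exact Finset.sum_comm

/-- The KL projection onto the column-marginal constraint set
`C_q = {π̃ ≥ 0 : π̃ᵀ𝟙 = q}` is the column rescaling `π̃_{ij} = π_{ij} q_j / Σ_k π_{kj}`. -/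
theorem KL_proj_col_marginal {N : ℕ} (hN : 1 ≤ N)
    (π : Fin N → Fin N → ℝ) (hπ : ∀ i j, 0 < π i j)
    (q : Fin N → ℝ) (hq : ∀ j, 0 < q j) :
    IsUniqMinOn (fun σ => KLmat σ π)
      {σ : Fin N → Fin N → ℝ | (∀ i j, 0 ≤ σ i j) ∧ ∀ j, ∑ i, σ i j = q j}
      (fun i j => π i j * q j / ∑ k, π k j) := by
  have : Nonempty (Fin N) := ⟨⟨0, hN⟩⟩
  simpa only [KLmat_eq_sum_fDiv_klFun fun i j => (hπ i j).ne'] using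
    KL_proj_col_marginal_general strictConvexOn_klFun hπ fun j => (hq j).le
end
end

section
/- Let N ≥ 1, σ > 0, κ > 0, w ∈ ℝ^N, and define f(p) = ι_{[0,κ]^N}(p) + ⟨w,p⟩ for p ∈ ℝ^N. Then for every p ∈ ℝ^N with strictly positive entries, the unique minimizer of p̃ ↦ KL(p̃|p) + σ f(p̃) over ℝ_+^N is given componentwise by (Prox^{KL}_{σf}(p))_i = min(p_i e^{−σ w_i}, κ). -/
open scoped BigOperators
open scoped Classical

noncomputable section

def KLvec {N : ℕ} (p q : Fin N → ℝ) : ℝ :=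
  ∑ i, (p i * Real.log (p i / q i) - p i + q i)

/-!
The KL divergence is the Bregman divergence of the negative entropy, so it satisfies the three-point
identity `KL(y|p) = KL(y|x) + KL(x|p) + ∑ (yᵢ - xᵢ) log(xᵢ/pᵢ)`. If `x` satisfies the first-order
variational inequality on the feasible set, the objective at a feasible `y` therefore exceeds the
objective at `x` by at least `KL(y|x)`, which is positive for `y ≠ x`. The clipped point
`min(p e^{-c}, κ)` satisfies this inequality coordinate by coordinate: the partial derivative
vanishes where the clipping is inactive, and is nonpositive where `xᵢ = κ ≥ yᵢ`.
-/

section UniqueMinimizer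

variable {α β : Type*}

theorem isUniqMinOn_of_forall_lt [Preorder β] {F : α → β} {S : Set α} {x : α} (hx : x ∈ S)
    (hlt : ∀ y ∈ S, y ≠ x → F x < F y) : IsUniqMinOn F S x := by
  refine ⟨hx, fun y hy => ?_, fun y hy hmin => ?_⟩
  · obtain rfl | hne := eq_or_ne y x
    · exact le_rfl
    · exact (hlt y hy hne).le
  · by_contra hne
    exact (hlt y hy hne).not_ge (hmin x hx)

theorem isUniqMinOn_coe_add_mul_ite_top {F g : α → ℝ} {S : Set α} {C : α → Prop}
    [DecidablePred C] {σ : ℝ} (hσ : 0 < σ) {x : α} (hxS : x ∈ S) (hxC : C x)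
    (hlt : ∀ y ∈ S, C y → y ≠ x → F x + σ * g x < F y + σ * g y) :
    IsUniqMinOn (fun r => (F r : EReal) + (σ : EReal) * if C r then (g r : EReal) else ⊤) S x := by
  refine isUniqMinOn_of_forall_lt hxS fun y hyS hne => ?_
  simp only [if_pos hxC]
  by_cases hyC : C y
  · simp only [if_pos hyC]
    exact_mod_cast hlt y hyS hyC hne
  · rw [if_neg hyC, EReal.coe_mul_top_of_pos hσ, EReal.coe_add_top]
    exact_mod_cast EReal.coe_lt_top (F x + σ * g x)

end UniqueMinimizer

section KullbackLeibler

variable {N : ℕ} {p x y c : Fin N → ℝ}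

theorem KLvec_eq_sum_mul_klFun (hx : ∀ i, x i ≠ 0) :
    KLvec y x = ∑ i, x i * InformationTheory.klFun (y i / x i) := by
  refine Finset.sum_congr rfl fun i _ => ?_
  have := hx i
  rw [InformationTheory.klFun_apply]
  field_simp
  ring

theorem KLvec_pos_of_ne (hx : ∀ i, 0 < x i) (hy : ∀ i, 0 ≤ y i) (hne : y ≠ x) :
    0 < KLvec y x := by
  have ratio_nonneg (i : Fin N) : 0 ≤ y i / x i := div_nonneg (hy i) (hx i).le
  have term_nonneg (i : Fin N) : 0 ≤ x i * InformationTheory.klFun (y i / x i) :=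
    mul_nonneg (hx i).le (InformationTheory.klFun_nonneg (ratio_nonneg i))
  obtain ⟨j, hj⟩ := Function.ne_iff.mp hne
  have klFun_ne_zero : InformationTheory.klFun (y j / x j) ≠ 0 := by
    rwa [Ne, InformationTheory.klFun_eq_zero_iff (ratio_nonneg j), div_eq_one_iff_eq (hx j).ne']
  rw [KLvec_eq_sum_mul_klFun fun i => (hx i).ne']
  exact Finset.sum_pos' (fun i _ => term_nonneg i)
    ⟨j, Finset.mem_univ j, (term_nonneg j).lt_of_ne' (mul_ne_zero (hx j).ne' klFun_ne_zero)⟩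

theorem mul_log_div_eq_add {a b d : ℝ} (hb : b ≠ 0) (hd : d ≠ 0) :
    a * Real.log (a / d) = a * Real.log (a / b) + a * Real.log (b / d) := by
  obtain rfl | ha := eq_or_ne a 0
  · simp
  · rw [← mul_add, ← Real.log_mul (div_ne_zero ha hb) (div_ne_zero hb hd),
      div_mul_div_cancel₀ hb]

theorem KLvec_three_point (hx : ∀ i, x i ≠ 0) (hp : ∀ i, p i ≠ 0) :
    KLvec y p = KLvec y x + KLvec x p + ∑ i, (y i - x i) * Real.log (x i / p i) := by
  simp only [KLvec, ← Finset.sum_add_distrib]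
  refine Finset.sum_congr rfl fun i _ => ?_
  rw [mul_log_div_eq_add (hx i) (hp i)]
  ring

theorem KLvec_add_sum_mul_lt_of_variational_ineq (hp : ∀ i, p i ≠ 0) (hx : ∀ i, 0 < x i)
    (hy : ∀ i, 0 ≤ y i) (hne : y ≠ x)
    (hvar : 0 ≤ ∑ i, (y i - x i) * (Real.log (x i / p i) + c i)) :
    KLvec x p + ∑ i, c i * x i < KLvec y p + ∑ i, c i * y i := by
  have split_gradient : ∑ i, (y i - x i) * (Real.log (x i / p i) + c i) =
      ∑ i, (y i - x i) * Real.log (x i / p i) + (∑ i, c i * y i - ∑ i, c i * x i) := by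
    rw [← Finset.sum_sub_distrib, ← Finset.sum_add_distrib]
    exact Finset.sum_congr rfl fun i _ => by ring
  linarith [KLvec_three_point (y := y) (fun i => (hx i).ne') hp, KLvec_pos_of_ne hx hy hne]

end KullbackLeibler

theorem sub_min_mul_log_min_div_add_nonneg {q κ a b : ℝ} (hq : 0 < q) (hκ : 0 < κ) (hb : b ≤ κ) :
    0 ≤ (b - min (q * Real.exp (-a)) κ) *
      (Real.log (min (q * Real.exp (-a)) κ / q) + a) := by
  obtain inactive | active := le_total (q * Real.exp (-a)) κ
  · simp [min_eq_left inactive, hq.ne']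
  · rw [min_eq_right active]
    have log_ratio_le : Real.log (κ / q) ≤ -a :=
      (Real.log_le_iff_le_exp (div_pos hκ hq)).2 ((div_le_iff₀' hq).2 active)
    exact mul_nonneg_of_nonpos_of_nonpos (by linarith) (by linarith)

/-- For `f(p̃) = ι_{[0,κ]^N}(p̃) + ⟨w,p̃⟩`, the KL proximal operator is
`Prox^{KL}_{σf}(p) = min(p ⊙ e^{-σw}, κ)` componentwise. -/
theorem KL_prox_box_linear {N : ℕ} (hN : 1 ≤ N)
    (σ κ : ℝ) (hσ : 0 < σ) (hκ : 0 < κ) (w : Fin N → ℝ)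
    (f : (Fin N → ℝ) → EReal)
    (hf : f = fun r =>
      if ∀ i, 0 ≤ r i ∧ r i ≤ κ then ((∑ i, w i * r i : ℝ) : EReal) else ⊤)
    (p : Fin N → ℝ) (hp : ∀ i, 0 < p i) :
    IsUniqMinOn (fun r => ((KLvec r p : ℝ) : EReal) + (σ : EReal) * f r)
      {r : Fin N → ℝ | ∀ i, 0 ≤ r i}
      (fun i => min (p i * Real.exp (-σ * w i)) κ) := by
  subst hf
  have clip_pos (i : Fin N) : 0 < min (p i * Real.exp (-σ * w i)) κ :=
    lt_min (mul_pos (hp i) (Real.exp_pos _)) hκ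
  refine isUniqMinOn_coe_add_mul_ite_top hσ (fun i => (clip_pos i).le)
    (fun i => ⟨(clip_pos i).le, min_le_right _ _⟩) fun y hy_nonneg hy_box hne => ?_
  simp only [Finset.mul_sum, ← mul_assoc]
  refine KLvec_add_sum_mul_lt_of_variational_ineq (fun i => (hp i).ne') clip_pos hy_nonneg hne
    (Finset.sum_nonneg fun i _ => ?_)
  rw [neg_mul]
  exact sub_min_mul_log_min_div_add_nonneg (hp i) hκ (hy_box i).2
end
end

section
/- (Linear-shift rule for weighted KL proximal operators.) Let M, N ≥ 1, λ ∈ ℝ^M with λ_m > 0, let h : (ℝ^N)^M → ℝ ∪ {+∞} be proper, lower semicontinuous and convex, and let w_1, …, w_M ∈ ℝ^N. Define f(p_1, …, p_M) = h(p_1, …, p_M) + Σ_{m=1}^M ⟨w_m, p_m⟩. Then for all strictly positive p_1, …, p_M ∈ ℝ^N, Prox^{KL_λ}_f(p_1, …, p_M) = Prox^{KL_λ}_h(p_1 ⊙ e^{−w_1/λ_1}, …, p_M ⊙ e^{−w_M/λ_M}), whenever the right-hand side proximal problem has a unique minimizer (in which case so does the left). -/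
open scoped BigOperators

noncomputable section

/-- Weighted KL divergence between `M`-tuples of vectors. -/
def KLlam {M N : ℕ} (lam : Fin M → ℝ) (P Q : Fin M → Fin N → ℝ) : ℝ :=
  ∑ m, lam m * KLvec (P m) (Q m)

/-!
Tilting the reference point `q` to `q ⊙ e^t` changes `KL(p|q)` by the linear term `-⟨t, p⟩` and a
constant independent of `p`. With `t = -w/λ` the linear term of `λ KL` is exactly `⟨w, p⟩`, so the
two proximal objectives differ by a finite constant and have the same minimizers.
-/

theorem isUniqMinOn_add_const_iff {α β : Type*} [AddCommMagma β] [Preorder β]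
    [AddLeftMono β] {c : β} (hc : AddLECancellable c) {F : α → β} {S : Set α} {x : α} :
    IsUniqMinOn (fun y => F y + c) S x ↔ IsUniqMinOn F S x := by
  simp only [IsUniqMinOn, hc.add_le_add_iff_right]

theorem mul_log_div_mul_exp {q : ℝ} (hq : q ≠ 0) (x t : ℝ) :
    x * Real.log (x / (q * Real.exp t)) = x * Real.log (x / q) - t * x := by
  rcases eq_or_ne x 0 with rfl | hx
  · simp
  · rw [← div_div, Real.log_div (div_ne_zero hx hq) (Real.exp_ne_zero t), Real.log_exp]
    ring

theorem KLvec_mul_exp {N : ℕ} {q : Fin N → ℝ} (hq : ∀ i, q i ≠ 0) (p t : Fin N → ℝ) :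
    KLvec p (fun i => q i * Real.exp (t i)) =
      KLvec p q - ∑ i, t i * p i + ∑ i, q i * (Real.exp (t i) - 1) := by
  simp only [KLvec, ← Finset.sum_sub_distrib, ← Finset.sum_add_distrib]
  refine Finset.sum_congr rfl fun i _ => ?_
  rw [mul_log_div_mul_exp (hq i)]
  ring

section LinearShift

variable {M N : ℕ} {lam : Fin M → ℝ} {P : Fin M → Fin N → ℝ}

theorem KLlam_mul_exp (hP : ∀ m i, P m i ≠ 0) (Q t : Fin M → Fin N → ℝ) :
    KLlam lam Q (fun m i => P m i * Real.exp (t m i)) =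
      KLlam lam Q P - ∑ m, ∑ i, lam m * t m i * Q m i +
        ∑ m, lam m * ∑ i, P m i * (Real.exp (t m i) - 1) := by
  simp only [KLlam, ← Finset.sum_sub_distrib, ← Finset.sum_add_distrib]
  refine Finset.sum_congr rfl fun m _ => ?_
  simp only [KLvec_mul_exp (hP m), mul_assoc, ← Finset.mul_sum]
  ring

theorem KLlam_add_linear (hlam : ∀ m, lam m ≠ 0) (hP : ∀ m i, P m i ≠ 0)
    (Q w : Fin M → Fin N → ℝ) :
    KLlam lam Q P + ∑ m, ∑ i, w m i * Q m i =
      KLlam lam Q (fun m i => P m i * Real.exp (-(w m i) / lam m)) +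
        ∑ m, lam m * ∑ i, P m i * (1 - Real.exp (-(w m i) / lam m)) := by
  have lam_mul_tilt (m : Fin M) (i : Fin N) : lam m * (-(w m i) / lam m) = -(w m i) :=
    mul_div_cancel₀ _ (hlam m)
  have const_neg : ∑ m, lam m * ∑ i, P m i * (1 - Real.exp (-(w m i) / lam m)) =
      -∑ m, lam m * ∑ i, P m i * (Real.exp (-(w m i) / lam m) - 1) := by
    simp only [← Finset.sum_neg_distrib, ← mul_neg, neg_sub]
  rw [const_neg, KLlam_mul_exp hP]
  simp only [lam_mul_tilt, neg_mul, Finset.sum_neg_distrib]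
  ring

theorem KL_prox_linear_shift_general (hlam : ∀ m, lam m ≠ 0)
    (h : (Fin M → Fin N → ℝ) → EReal) (w : Fin M → Fin N → ℝ) (hP : ∀ m i, 0 < P m i)
    (Ptil : Fin M → Fin N → ℝ) :
    IsUniqMinOn
      (fun Q => ((KLlam lam Q P : ℝ) : EReal) + h Q +
        ((∑ m, ∑ i, w m i * Q m i : ℝ) : EReal))
      {Q : Fin M → Fin N → ℝ | ∀ m i, 0 ≤ Q m i} Ptil ↔
    IsUniqMinOn
      (fun Q => ((KLlam lam Q
          (fun m i => P m i * Real.exp (-(w m i) / lam m)) : ℝ) : EReal) + h Q)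
      {Q : Fin M → Fin N → ℝ | ∀ m i, 0 ≤ Q m i} Ptil := by
  have objective_eq (Q : Fin M → Fin N → ℝ) :
      ((KLlam lam Q P : ℝ) : EReal) + h Q + ((∑ m, ∑ i, w m i * Q m i : ℝ) : EReal) =
        ((KLlam lam Q (fun m i => P m i * Real.exp (-(w m i) / lam m)) : ℝ) : EReal) + h Q +
          ((∑ m, lam m * ∑ i, P m i * (1 - Real.exp (-(w m i) / lam m)) : ℝ) : EReal) := by
    rw [add_right_comm, add_right_comm _ (h Q), ← EReal.coe_add, ← EReal.coe_add,
      KLlam_add_linear hlam (fun m i => (hP m i).ne')]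
  simp only [objective_eq]
  exact isUniqMinOn_add_const_iff (EReal.addLECancellable_coe _)

end LinearShift

/-- Linear-shift rule: for `f(p₁,…,p_M) = h(p₁,…,p_M) + Σ_m ⟨w_m, p_m⟩`,
`Prox^{KL_λ}_f(p₁,…,p_M) = Prox^{KL_λ}_h(p₁ ⊙ e^{-w₁/λ₁}, …, p_M ⊙ e^{-w_M/λ_M})`,
whenever the right-hand side proximal problem has a unique minimizer. -/
theorem KL_prox_linear_shift {M N : ℕ} (hM : 1 ≤ M) (hN : 1 ≤ N)
    (lam : Fin M → ℝ) (hlam : ∀ m, 0 < lam m)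
    (h : (Fin M → Fin N → ℝ) → EReal) (hh : ProperLSCConvex h)
    (w : Fin M → Fin N → ℝ)
    (P : Fin M → Fin N → ℝ) (hP : ∀ m i, 0 < P m i)
    (Ptil : Fin M → Fin N → ℝ)
    (hrhs : IsUniqMinOn
      (fun Q => ((KLlam lam Q
          (fun m i => P m i * Real.exp (-(w m i) / lam m)) : ℝ) : EReal) + h Q)
      {Q : Fin M → Fin N → ℝ | ∀ m i, 0 ≤ Q m i} Ptil) :
    IsUniqMinOn
      (fun Q => ((KLlam lam Q P : ℝ) : EReal) + h Q +
        ((∑ m, ∑ i, w m i * Q m i : ℝ) : EReal))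
      {Q : Fin M → Fin N → ℝ | ∀ m i, 0 ≤ Q m i} Ptil :=
  (KL_prox_linear_shift_general (fun m => (hlam m).ne') h w hP Ptil).2 hrhs
end
end

section
/- (Equality-constraint rule for weighted KL proximal operators.) Let M, N ≥ 1, λ ∈ ℝ^M with λ_m > 0, set Λ = Σ_m λ_m and λ̃_m = λ_m/Λ. Let h : (ℝ^N)^M → ℝ ∪ {+∞} be proper, lower semicontinuous and convex, let D = {(p_1, …, p_M) : p_1 = p_2 = … = p_M}, and define f = ι_D + h and h̃(p) = h(p, …, p). Then for all strictly positive p_1, …, p_M ∈ ℝ^N, Prox^{KL_λ}_f(p_1, …, p_M) = (p, …, p) where p = Prox^{KL}_{(1/Λ) h̃}( p_1^{λ̃_1} ⊙ ⋯ ⊙ p_M^{λ̃_M} ) (entrywise powers and products), whenever the right-hand side proximal problem has a unique minimizer. -/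
open scoped BigOperators
open scoped Classical

noncomputable section

/-!
On a constant tuple `(r, …, r)` the weighted divergence `KL_λ` is a weighted sum of
`r log r - r log p_m` terms. Since `∑ m, λ_m log p_m = Λ log (∏ m, p_m ^ (λ_m / Λ))`, it equals
`Λ` times the divergence of `r` from the weighted geometric mean, up to a constant independent
of `r`. The diagonal problem is therefore the image of the single-vector problem under the
strictly increasing map `t ↦ Λ t + C` of the extended reals. Off the diagonal the objective is
`⊤`, so replacing a tuple by the constant tuple on any of its entries never increases the
objective, and unique minimizers on the diagonal are unique minimizers among all tuples.
-/

namespace IsUniqMinOn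

variable {ι α β γ : Type*}

theorem strictMono_comp [LinearOrder β] [Preorder γ] {F : α → β} {S : Set α} {x : α} {φ : β → γ}
    (hx : IsUniqMinOn F S x) (hφ : StrictMono φ) : IsUniqMinOn (fun y => φ (F y)) S x := by
  obtain ⟨mem, min, uniq⟩ := hx
  exact ⟨mem, fun y hy => hφ.monotone (min y hy),
    fun y hy hmin => uniq y hy fun z hz => hφ.le_iff_le.mp (hmin z hz)⟩

theorem of_const_le [Nonempty ι] [Preorder β] {G : (ι → α) → β} {S : Set α} {x : α}
    (hx : IsUniqMinOn (fun r => G fun _ => r) S x) (hG : ∀ Q m, G (fun _ => Q m) ≤ G Q) :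
    IsUniqMinOn G {Q | ∀ m, Q m ∈ S} fun _ => x := by
  obtain ⟨mem, min, uniq⟩ := hx
  refine ⟨fun _ => mem, fun Q hQ => ?_, fun Q hQ hmin => funext fun m => ?_⟩
  · obtain ⟨m⟩ := ‹Nonempty ι›
    exact (min (Q m) (hQ m)).trans (hG Q m)
  · exact uniq (Q m) (hQ m) fun z hz => (hG Q m).trans (hmin (fun _ => z) fun _ => hz)

theorem add_diagonal_indicator [Nonempty ι] [∀ Q : ι → α, Decidable (∀ m m', Q m = Q m')]
    {F : (ι → α) → ℝ} {h : (ι → α) → EReal} {S : Set α} {x : α}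
    (hx : IsUniqMinOn (fun r => (F (fun _ => r) : EReal) + h fun _ => r) S x)
    (hh : ∀ Q, h Q ≠ ⊥) :
    IsUniqMinOn
      (fun Q => (F Q : EReal) + ((if ∀ m m', Q m = Q m' then (0 : EReal) else ⊤) + h Q))
      {Q | ∀ m, Q m ∈ S} fun _ => x := by
  refine of_const_le (by simpa only [implies_true, if_true, zero_add] using hx) fun Q m => ?_
  by_cases hQ : ∀ k l, Q k = Q l
  · have hconst : (fun _ => Q m) = Q := funext fun k => hQ m k
    rw [hconst]
  · rw [if_neg hQ, EReal.top_add_of_ne_bot (hh Q), EReal.coe_add_top]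
    exact le_top

end IsUniqMinOn

theorem strictMono_ereal_coe_mul_add_coe {a : ℝ} (ha : 0 < a) (b : ℝ) :
    StrictMono fun x : EReal => (a : EReal) * x + b := by
  have div_inv : ∀ x : EReal, (a : EReal) * x = x / ((a⁻¹ : ℝ) : EReal) := fun x => by
    rw [EReal.div_eq_inv_mul, ← EReal.coe_inv, inv_inv]
  intro x y hxy
  simp only [div_inv]
  exact EReal.add_lt_add_right_coe (EReal.strictMono_div_right_of_pos
    (EReal.coe_pos.mpr (inv_pos.mpr ha)) (EReal.coe_ne_top _) hxy) b

theorem ereal_coe_mul_add_one_div_mul_add {a : ℝ} (ha : 0 < a) (b c : ℝ) (x : EReal) :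
    (a : EReal) * (b + ((1 / a : ℝ) : EReal) * x) + c = ((a * b + c : ℝ) : EReal) + x := by
  rw [EReal.left_distrib_of_nonneg_of_ne_top (EReal.coe_nonneg.mpr ha.le) (EReal.coe_ne_top a),
    ← mul_assoc, ← EReal.coe_mul, ← EReal.coe_mul, mul_one_div_cancel ha.ne', EReal.coe_one,
    one_mul, EReal.coe_add, add_right_comm]

section WeightedGeometricMean

variable {ι : Type*} [Fintype ι] {w : ι → ℝ} {W : ℝ}

theorem mul_log_prod_rpow_div (hW : W ≠ 0) {q : ι → ℝ} (hq : ∀ m, 0 < q m) :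
    W * Real.log (∏ m, q m ^ (w m / W)) = ∑ m, w m * Real.log (q m) := by
  rw [Real.log_prod fun m _ => (Real.rpow_pos_of_pos (hq m) _).ne', Finset.mul_sum]
  refine Finset.sum_congr rfl fun m _ => ?_
  rw [Real.log_rpow (hq m), ← mul_assoc, mul_div_cancel₀ _ hW]

theorem sum_mul_mul_log_div_eq (hw : W = ∑ m, w m) (hW : W ≠ 0) {q : ι → ℝ}
    (hq : ∀ m, 0 < q m) (x : ℝ) :
    ∑ m, w m * (x * Real.log (x / q m)) = W * (x * Real.log (x / ∏ m, q m ^ (w m / W))) := by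
  rcases eq_or_ne x 0 with rfl | hx
  · simp
  have hprod : ∏ m, q m ^ (w m / W) ≠ 0 :=
    (Finset.prod_pos fun m _ => Real.rpow_pos_of_pos (hq m) _).ne'
  calc ∑ m, w m * (x * Real.log (x / q m))
      = ∑ m, (w m * (x * Real.log x) - x * (w m * Real.log (q m))) :=
        Finset.sum_congr rfl fun m _ => by rw [Real.log_div hx (hq m).ne']; ring
    _ = W * (x * Real.log x) - x * ∑ m, w m * Real.log (q m) := by
        rw [Finset.sum_sub_distrib, ← Finset.sum_mul, ← Finset.mul_sum, ← hw]
    _ = W * (x * Real.log (x / ∏ m, q m ^ (w m / W))) := by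
        rw [← mul_log_prod_rpow_div hW hq, Real.log_div hx hprod]; ring

end WeightedGeometricMean

theorem KLlam_const {M N : ℕ} {lam : Fin M → ℝ} {Lam : ℝ} (hLam : Lam = ∑ m, lam m)
    (hLam_ne : Lam ≠ 0) {P : Fin M → Fin N → ℝ} (hP : ∀ m i, 0 < P m i) (r : Fin N → ℝ) :
    KLlam lam (fun _ => r) P =
      Lam * KLvec r (fun i => ∏ m, P m i ^ (lam m / Lam)) +
        ∑ i, (∑ m, lam m * P m i - Lam * ∏ m, P m i ^ (lam m / Lam)) := by
  simp only [KLlam, KLvec, Finset.mul_sum]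
  rw [Finset.sum_comm, ← Finset.sum_add_distrib]
  refine Finset.sum_congr rfl fun i _ => ?_
  calc ∑ m, lam m * (r i * Real.log (r i / P m i) - r i + P m i)
      = ∑ m, lam m * (r i * Real.log (r i / P m i)) - Lam * r i + ∑ m, lam m * P m i := by
        simp only [mul_add, mul_sub, Finset.sum_add_distrib, Finset.sum_sub_distrib, hLam,
          Finset.sum_mul]
    _ = Lam * (r i * Real.log (r i / ∏ m, P m i ^ (lam m / Lam))) - Lam * r i +
          ∑ m, lam m * P m i := by
        rw [sum_mul_mul_log_div_eq hLam hLam_ne (hP · i)]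
    _ = _ := by ring

theorem KL_prox_equality_constraint_general {M N : ℕ} (lam : Fin M → ℝ)
    (Lam : ℝ) (hLam : Lam = ∑ m, lam m) (hLam_pos : 0 < Lam)
    (h : (Fin M → Fin N → ℝ) → EReal) (hh : ∀ Q, h Q ≠ ⊥)
    (P : Fin M → Fin N → ℝ) (hP : ∀ m i, 0 < P m i)
    (p : Fin N → ℝ)
    (hrhs : IsUniqMinOn
      (fun r => ((KLvec r (fun i => ∏ m, P m i ^ (lam m / Lam)) : ℝ) : EReal) +
        ((1 / Lam : ℝ) : EReal) * h (fun _ => r))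
      {r : Fin N → ℝ | ∀ i, 0 ≤ r i} p) :
    IsUniqMinOn
      (fun Q => ((KLlam lam Q P : ℝ) : EReal) +
        ((if ∀ m m', Q m = Q m' then (0 : EReal) else ⊤) + h Q))
      {Q : Fin M → Fin N → ℝ | ∀ m i, 0 ≤ Q m i} (fun _ => p) := by
  have : Nonempty (Fin M) :=
    Finset.univ_nonempty_iff.mp (Finset.nonempty_of_sum_ne_zero (hLam ▸ hLam_pos.ne'))
  refine IsUniqMinOn.add_diagonal_indicator (F := fun Q => KLlam lam Q P)
    (S := {r | ∀ i, 0 ≤ r i}) ?_ hh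
  simp only [KLlam_const hLam hLam_pos.ne' hP, ← ereal_coe_mul_add_one_div_mul_add hLam_pos]
  exact hrhs.strictMono_comp (strictMono_ereal_coe_mul_add_coe hLam_pos _)

/-- Equality-constraint rule: for `f = ι_D + h` with
`D = {(p₁,…,p_M) : p₁ = ⋯ = p_M}`, one has `Prox^{KL_λ}_f(p₁,…,p_M) = (p,…,p)` where
`p = Prox^{KL}_{(1/Λ) h̃}(p₁^{λ̃₁} ⊙ ⋯ ⊙ p_M^{λ̃_M})`, `Λ = Σ_m λ_m`, `λ̃_m = λ_m/Λ`,
`h̃(p) = h(p,…,p)`, whenever the right-hand side proximal problem has a unique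
minimizer. -/
theorem KL_prox_equality_constraint {M N : ℕ} (hM : 1 ≤ M) (hN : 1 ≤ N)
    (lam : Fin M → ℝ) (hlam : ∀ m, 0 < lam m)
    (Lam : ℝ) (hLam : Lam = ∑ m, lam m)
    (h : (Fin M → Fin N → ℝ) → EReal) (hh : ProperLSCConvex h)
    (P : Fin M → Fin N → ℝ) (hP : ∀ m i, 0 < P m i)
    (p : Fin N → ℝ)
    (hrhs : IsUniqMinOn
      (fun r => ((KLvec r (fun i => ∏ m, P m i ^ (lam m / Lam)) : ℝ) : EReal) +
        ((1 / Lam : ℝ) : EReal) * h (fun _ => r))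
      {r : Fin N → ℝ | ∀ i, 0 ≤ r i} p) :
    IsUniqMinOn
      (fun Q => ((KLlam lam Q P : ℝ) : EReal) +
        ((if ∀ m m', Q m = Q m' then (0 : EReal) else ⊤) + h Q))
      {Q : Fin M → Fin N → ℝ | ∀ m i, 0 ≤ Q m i} (fun _ => p) := by
  have : NeZero M := ⟨Nat.ne_of_gt hM⟩
  exact KL_prox_equality_constraint_general lam Lam hLam
    (hLam ▸ Finset.sum_pos (fun m _ => hlam m) Finset.univ_nonempty) h hh.1 P hP p hrhs
end
end

section
/- (Lifting rule for KL proximal operators through row marginals.) Let M, N ≥ 1, λ ∈ ℝ^M with λ_m > 0, and let h : (ℝ^N)^M → ℝ ∪ {+∞} be proper, lower semicontinuous and convex. Define f(π_1, …, π_M) = h(π_1𝟙, …, π_M𝟙) on M-tuples of N×N matrices. Then for all matrices π_1, …, π_M with strictly positive entries, writing p_m = π_m𝟙 and (p̃_1, …, p̃_M) = Prox^{KL_λ}_h(p_1, …, p_M) (assumed to exist uniquely with strictly positive entries), one has Prox^{KL_λ}_f(π_1, …, π_M) = ( diag(p̃_1 ⊘ p_1) π_1, …, diag(p̃_M ⊘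 p_M) π_M ). -/
open scoped BigOperators

noncomputable section

/-- Weighted KL divergence between `M`-tuples of vectors. -/
def KLlamVec {M N : ℕ} (lam : Fin M → ℝ) (P Q : Fin M → Fin N → ℝ) : ℝ :=
  ∑ m, lam m * KLvec (P m) (Q m)

/-- Weighted KL divergence between `M`-tuples of matrices. -/
def KLlamMat {M N : ℕ} (lam : Fin M → ℝ)
    (Pi Xi : Fin M → Fin N → Fin N → ℝ) : ℝ :=
  ∑ m, lam m * KLmat (Pi m) (Xi m)

/-!
Along a row, `KL(x|q) = ∑ j, q j * klFun (x j / q j)`, so Jensen's inequality for the strictly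
convex function `klFun` gives `KL(∑ x|∑ q) ≤ KL(x|q)`, with equality exactly when `x` is
proportional to `q`. Hence, among the tuples with prescribed row sums `p̃`, the divergence from `π`
is minimized only by the row rescaling of `π`, where it equals the divergence of `p̃` from the row
sums of `π`. What remains is the minimization over `p̃`, which is the proximal problem for `h`.
-/

open Finset InformationTheory

namespace IsUniqMinOn

lemma ne_top {α β : Type*} [PartialOrder β] [OrderTop β] {F : α → β} {S : Set α} {x : α}
    (hx : IsUniqMinOn F S x) (hS : S.Nontrivial) : F x ≠ ⊤ := by
  intro htop
  obtain ⟨y, hyS, hyx⟩ := hS.exists_ne x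
  have hFtop : ∀ z ∈ S, F z = ⊤ := fun z hz ↦ top_le_iff.1 (htop ▸ hx.2.1 z hz)
  exact hyx (hx.2.2 y hyS fun z hz ↦ (hFtop z hz).symm ▸ le_top)

lemma lift_section {X Y : Type*} {S : Set X} {T : Set Y} {A : X → Y} {L : Y → X}
    {G : X → ℝ} {g : Y → ℝ} {h : Y → EReal} {y : Y}
    (hA : Set.MapsTo A S T) (hL : Set.MapsTo L T S) (hAL : Set.LeftInvOn A L T)
    (hle : ∀ x ∈ S, g (A x) ≤ G x) (heq : ∀ x ∈ S, g (A x) = G x ↔ x = L (A x))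
    (hbot : h y ≠ ⊥) (htop : h y ≠ ⊤)
    (hy : IsUniqMinOn (fun r ↦ (g r : EReal) + h r) T y) :
    IsUniqMinOn (fun x ↦ (G x : EReal) + h (A x)) S (L y) := by
  obtain ⟨hyT, hmin, huniq⟩ := hy
  have hALy : A (L y) = y := hAL hyT
  have hGLy : G (L y) = g y := by
    rw [← (heq _ (hL hyT)).2 (by rw [hALy]), hALy]
  have hlower : ∀ x ∈ S, (g (A x) : EReal) + h (A x) ≤ G x + h (A x) := fun x hx ↦ by
    gcongr
    exact hle x hx
  refine ⟨hL hyT, fun x hx ↦ ?_, fun x hx hxmin ↦ ?_⟩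
  · simpa only [hALy, hGLy] using (hmin _ (hA hx)).trans (hlower x hx)
  · have hxy : (G x : EReal) + h (A x) ≤ g y + h y := by
      simpa only [hALy, hGLy] using hxmin _ (hL hyT)
    have hAx : A x = y :=
      huniq _ (hA hx) fun r hr ↦ ((hlower x hx).trans hxy).trans (hmin r hr)
    have hGx : G x ≤ g (A x) := by
      rw [hAx] at hxy ⊢
      lift h y to ℝ using ⟨htop, hbot⟩ with c
      exact_mod_cast (EReal.addLECancellable_coe c).add_le_add_iff_right.1 hxy
    rw [(heq x hx).1 ((hle x hx).antisymm hGx), hAx]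

end IsUniqMinOn

lemma nontrivial_setOf_nonneg {τ ι : Type*} [Nonempty τ] [Nonempty ι] :
    {R : τ → ι → ℝ | ∀ m i, 0 ≤ R m i}.Nontrivial :=
  ⟨0, fun _ _ ↦ le_rfl, 1, fun _ _ ↦ zero_le_one, zero_ne_one⟩

lemma strictConvexOn_map_centerMass_eq_iff {ι E : Type*} [AddCommGroup E] [Module ℝ E]
    {s : Set E} {f : E → ℝ} {t : Finset ι} {w : ι → ℝ} {p : ι → E}
    (hf : StrictConvexOn ℝ s f) (hw : ∀ i ∈ t, 0 < w i) (ht : t.Nonempty)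
    (hp : ∀ i ∈ t, p i ∈ s) :
    f (t.centerMass w p) = t.centerMass w (f ∘ p) ↔ ∀ j ∈ t, p j = t.centerMass w p := by
  have hsum : 0 < ∑ i ∈ t, w i := sum_pos hw ht
  have hnorm : ∑ i ∈ t, (∑ k ∈ t, w k)⁻¹ * w i = 1 := by
    rw [← mul_sum, inv_mul_cancel₀ hsum.ne']
  simpa only [centerMass, smul_sum, smul_smul, Function.comp_apply] using
    hf.map_sum_eq_iff (fun i hi ↦ mul_pos (inv_pos.2 hsum) (hw i hi)) hnorm hp

/-- The Kullback–Leibler divergence `KL(x|y)` of two scalars, meaningful for `0 ≤ x` and `0 < y`.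
The convention `0 log 0 = 0` is the product `0 * Real.log 0`. -/
def scalarKL (x y : ℝ) : ℝ := x * Real.log (x / y) - x + y

lemma scalarKL_eq_mul_klFun (x : ℝ) {y : ℝ} (hy : y ≠ 0) :
    scalarKL x y = y * klFun (x / y) := by
  rw [scalarKL, klFun_apply]
  field_simp
  ring

section Row

variable {κ : Type*} [Fintype κ]

/-- The Kullback–Leibler divergence `KL(x|q)` of two vectors indexed by an arbitrary finite type,
definitionally `KLvec` on `Fin N`. Its sum over the rows is the divergence of two matrices. -/
def vectorKL (x q : κ → ℝ) : ℝ := ∑ j, scalarKL (x j) (q j)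

/-- The multiple of `q` whose entries add up to `r`. Applied to every row of a matrix `π` it gives
`diag(r ⊘ π𝟙) π`. -/
def rescale (r : ℝ) (q : κ → ℝ) : κ → ℝ := fun j ↦ r / (∑ k, q k) * q j

lemma sum_rescale (r : ℝ) {q : κ → ℝ} (hq : ∑ k, q k ≠ 0) : ∑ j, rescale r q j = r := by
  simp only [rescale, ← mul_sum, div_mul_cancel₀ r hq]

lemma rescale_nonneg {r : ℝ} (hr : 0 ≤ r) {q : κ → ℝ} (hq : ∀ j, 0 ≤ q j) (j : κ) :
    0 ≤ rescale r q j :=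
  mul_nonneg (div_nonneg hr (sum_nonneg fun k _ ↦ hq k)) (hq j)

lemma centerMass_div (x : κ → ℝ) {q : κ → ℝ} (hq : ∀ j, q j ≠ 0) :
    univ.centerMass q (x / q) = (∑ j, x j) / ∑ j, q j := by
  simp only [centerMass, Pi.div_apply, smul_eq_mul, mul_div_cancel₀ _ (hq _), inv_mul_eq_div]

lemma scalarKL_sum_sum_eq (x : κ → ℝ) {q : κ → ℝ} (hq : ∀ j, q j ≠ 0) (hsum : ∑ j, q j ≠ 0) :
    scalarKL (∑ j, x j) (∑ j, q j) = (∑ j, q j) * klFun (univ.centerMass q (x / q)) := by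
  rw [scalarKL_eq_mul_klFun _ hsum, centerMass_div x hq]

lemma vectorKL_eq_mul_centerMass (x : κ → ℝ) {q : κ → ℝ} (hq : ∀ j, q j ≠ 0)
    (hsum : ∑ j, q j ≠ 0) :
    vectorKL x q = (∑ j, q j) * univ.centerMass q (klFun ∘ (x / q)) := by
  simp only [vectorKL, scalarKL_eq_mul_klFun _ (hq _), centerMass, smul_eq_mul,
    Function.comp_apply, Pi.div_apply, mul_inv_cancel_left₀ hsum]

variable [Nonempty κ] {x q : κ → ℝ}

lemma scalarKL_sum_sum_le_vectorKL (hx : ∀ j, 0 ≤ x j) (hq : ∀ j, 0 < q j) :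
    scalarKL (∑ j, x j) (∑ j, q j) ≤ vectorKL x q := by
  have hsum : 0 < ∑ j, q j := sum_pos (fun j _ ↦ hq j) univ_nonempty
  rw [scalarKL_sum_sum_eq x (fun j ↦ (hq j).ne') hsum.ne',
    vectorKL_eq_mul_centerMass x (fun j ↦ (hq j).ne') hsum.ne']
  gcongr
  exact convexOn_klFun.map_centerMass_le (fun j _ ↦ (hq j).le) hsum
    fun j _ ↦ div_nonneg (hx j) (hq j).le

lemma scalarKL_sum_sum_eq_vectorKL_iff (hx : ∀ j, 0 ≤ x j) (hq : ∀ j, 0 < q j) :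
    scalarKL (∑ j, x j) (∑ j, q j) = vectorKL x q ↔ x = rescale (∑ j, x j) q := by
  have hsum : 0 < ∑ j, q j := sum_pos (fun j _ ↦ hq j) univ_nonempty
  rw [scalarKL_sum_sum_eq x (fun j ↦ (hq j).ne') hsum.ne',
    vectorKL_eq_mul_centerMass x (fun j ↦ (hq j).ne') hsum.ne', mul_right_inj' hsum.ne',
    strictConvexOn_map_centerMass_eq_iff (p := x / q) strictConvexOn_klFun (fun j _ ↦ hq j)
      univ_nonempty fun j _ ↦ div_nonneg (hx j) (hq j).le,
    centerMass_div x fun j ↦ (hq j).ne']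
  simp only [mem_univ, true_imp_iff, Pi.div_apply, funext_iff, rescale, div_eq_iff (hq _).ne']

end Row

section Tuple

variable {τ ι κ : Type*} [Fintype τ] [Fintype ι] [Fintype κ] [Nonempty κ] {lam : τ → ℝ}
  {Sig Pi : τ → ι → κ → ℝ}

lemma sum_mul_vectorKL_rowSum_le (hlam : ∀ m, 0 ≤ lam m) (hSig : ∀ m i j, 0 ≤ Sig m i j)
    (hPi : ∀ m i j, 0 < Pi m i j) :
    ∑ m, lam m * vectorKL (fun i ↦ ∑ j, Sig m i j) (fun i ↦ ∑ j, Pi m i j) ≤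
      ∑ m, lam m * ∑ i, vectorKL (Sig m i) (Pi m i) :=
  sum_le_sum fun m _ ↦ mul_le_mul_of_nonneg_left
    (sum_le_sum fun i _ ↦ scalarKL_sum_sum_le_vectorKL (hSig m i) (hPi m i)) (hlam m)

lemma sum_mul_vectorKL_rowSum_eq_iff (hlam : ∀ m, 0 < lam m) (hSig : ∀ m i j, 0 ≤ Sig m i j)
    (hPi : ∀ m i j, 0 < Pi m i j) :
    ∑ m, lam m * vectorKL (fun i ↦ ∑ j, Sig m i j) (fun i ↦ ∑ j, Pi m i j) =
        ∑ m, lam m * ∑ i, vectorKL (Sig m i) (Pi m i) ↔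
      Sig = fun m i ↦ rescale (∑ j, Sig m i j) (Pi m i) := by
  have hrow : ∀ m, ∀ i ∈ univ, scalarKL (∑ j, Sig m i j) (∑ j, Pi m i j) ≤
      vectorKL (Sig m i) (Pi m i) :=
    fun m i _ ↦ scalarKL_sum_sum_le_vectorKL (hSig m i) (hPi m i)
  have hmat : ∀ m ∈ univ, lam m * vectorKL (fun i ↦ ∑ j, Sig m i j) (fun i ↦ ∑ j, Pi m i j) ≤
      lam m * ∑ i, vectorKL (Sig m i) (Pi m i) :=
    fun m _ ↦ mul_le_mul_of_nonneg_left (sum_le_sum (hrow m)) (hlam m).le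
  rw [sum_eq_sum_iff_of_le hmat]
  simp only [mem_univ, true_imp_iff, mul_right_inj' (hlam _).ne', vectorKL.eq_def (κ := ι),
    sum_eq_sum_iff_of_le (hrow _), scalarKL_sum_sum_eq_vectorKL_iff (hSig _ _) (hPi _ _),
    funext_iff (f := Sig), funext_iff (f := Sig _)]

theorem KL_prox_lifting_rows_general [Nonempty τ] [Nonempty ι] (hlam : ∀ m, 0 < lam m)
    {h : (τ → ι → ℝ) → EReal} {Ptil : τ → ι → ℝ} (hbot : h Ptil ≠ ⊥)
    (hPi : ∀ m i j, 0 < Pi m i j)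
    (hvec : IsUniqMinOn
      (fun R ↦ ((∑ m, lam m * vectorKL (R m) (fun i ↦ ∑ j, Pi m i j) : ℝ) : EReal) + h R)
      {R : τ → ι → ℝ | ∀ m i, 0 ≤ R m i} Ptil) :
    IsUniqMinOn
      (fun Sig ↦ ((∑ m, lam m * ∑ i, vectorKL (Sig m i) (Pi m i) : ℝ) : EReal) +
        h (fun m i ↦ ∑ j, Sig m i j))
      {Sig : τ → ι → κ → ℝ | ∀ m i j, 0 ≤ Sig m i j}
      (fun m i ↦ rescale (Ptil m i) (Pi m i)) := by
  have hsum : ∀ m i, ∑ j, Pi m i j ≠ 0 := fun m i ↦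
    (sum_pos (fun j _ ↦ hPi m i j) univ_nonempty).ne'
  have htop : h Ptil ≠ ⊤ := fun htop ↦
    hvec.ne_top nontrivial_setOf_nonneg (by simp only [htop, EReal.coe_add_top])
  refine hvec.lift_section (A := fun Sig m i ↦ ∑ j, Sig m i j)
    (L := fun R m i ↦ rescale (R m i) (Pi m i)) ?_ ?_ ?_ ?_ ?_ hbot htop
  · exact fun Sig hSig m i ↦ sum_nonneg fun j _ ↦ hSig m i j
  · exact fun R hR m i ↦ rescale_nonneg (hR m i) fun j ↦ (hPi m i j).le
  · exact fun R _ ↦ funext₂ fun m i ↦ sum_rescale (R m i) (hsum m i)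
  · exact fun Sig hSig ↦ sum_mul_vectorKL_rowSum_le (fun m ↦ (hlam m).le) hSig hPi
  · exact fun Sig hSig ↦ sum_mul_vectorKL_rowSum_eq_iff hlam hSig hPi

end Tuple

/-- Lifting rule through row marginals: for `f(π₁,…,π_M) = h(π₁𝟙,…,π_M𝟙)`,
`Prox^{KL_λ}_f(π₁,…,π_M) = (diag(p̃₁ ⊘ p₁) π₁, …, diag(p̃_M ⊘ p_M) π_M)` where
`p_m = π_m𝟙` and `(p̃₁,…,p̃_M) = Prox^{KL_λ}_h(p₁,…,p_M)` (assumed to exist uniquely,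
with strictly positive entries). -/
theorem KL_prox_lifting_rows {M N : ℕ} (hM : 1 ≤ M) (hN : 1 ≤ N)
    (lam : Fin M → ℝ) (hlam : ∀ m, 0 < lam m)
    (h : (Fin M → Fin N → ℝ) → EReal) (hh : ProperLSCConvex h)
    (Pi : Fin M → Fin N → Fin N → ℝ) (hPi : ∀ m i j, 0 < Pi m i j)
    (Ptil : Fin M → Fin N → ℝ) (hPtilpos : ∀ m i, 0 < Ptil m i)
    (hvec : IsUniqMinOn
      (fun R => ((KLlamVec lam R (fun m i => ∑ j, Pi m i j) : ℝ) : EReal) + h R)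
      {R : Fin M → Fin N → ℝ | ∀ m i, 0 ≤ R m i} Ptil) :
    IsUniqMinOn
      (fun Sig => ((KLlamMat lam Sig Pi : ℝ) : EReal) +
        h (fun m i => ∑ j, Sig m i j))
      {Sig : Fin M → Fin N → Fin N → ℝ | ∀ m i j, 0 ≤ Sig m i j}
      (fun m i j => Ptil m i / (∑ k, Pi m i k) * Pi m i j) := by
  have : NeZero M := ⟨by lia⟩
  have : NeZero N := ⟨by lia⟩
  exact KL_prox_lifting_rows_general hlam (hh.1 Ptil) hPi hvec
end
end
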